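/- arXiv:1612.06092 — 8 statements merged into one kernel-verified Lean document; each statement's English description precedes it below -/
import Mathlib

section
/- Decomposition of nondeterministic ordered read-k-times branching programs (Lemma 1): Let k ≥ 1, w ≥ 1 and let f : {0,1}^n → {0,1} be computed by a k-NOBDD of width w with order θ. Then there exist an integer d with 1 ≤ d ≤ w^{k−1} and Boolean functions g_{j,i} : {0,1}^n → {0,1} for 1 ≤ j ≤ d, 1 ≤ i ≤ k, each computed by some NOBDD of width w with the same order θ, such that for every input ν ∈ {0,1}^n, f(ν) = ⋁_{j=1}^{d} ⋀_{i=1}^{k} g_{j,i}(ν). -/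
/-- The variable index read at level `m` of a `k`-layer ordered BDD with order `θ`. -/
def varIdx {n : ℕ} (k : ℕ) (θ : Equiv.Perm (Fin n)) (m : Fin (k * n)) : Fin n :=
  θ ⟨m.val % n, Nat.mod_lt _ (Nat.pos_of_ne_zero (fun h => absurd m.isLt (by subst h; simp)))⟩

/-- A nondeterministic ordered read-`k`-times branching program (`k`-NOBDD) of width `w`
over `n` Boolean variables. -/
structure KNOBDD (n k w : ℕ) where
  order : Equiv.Perm (Fin n)
  trans : Fin (k * n) → Fin w → Bool → Fin w → Prop
  start : Fin w
  accept : Fin w → Prop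

/-- The `k`-NOBDD `P` computes `f` if for every input there is an accepting run iff `f` is 1. -/
def KNOBDD.Computes {n k w : ℕ} (P : KNOBDD n k w) (f : (Fin n → Bool) → Bool) : Prop :=
  ∀ ν : Fin n → Bool,
    (f ν = true ↔
      ∃ run : Fin (k * n + 1) → Fin w,
        run 0 = P.start ∧
        (∀ m : Fin (k * n),
          P.trans m (run m.castSucc) (ν (varIdx k P.order m)) (run m.succ)) ∧
        P.accept (run (Fin.last (k * n))))

/-!
Cut an accepting run at the `k - 1` boundaries between consecutive passes over the variables. Once
the nodes on these boundaries are guessed, which can be done in `w ^ (k - 1)` ways, the passes are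
independent of each other: each is an NOBDD that must lead from its guessed entry node to its
guessed exit node. So the input is accepted iff, for some guess, all `k` passes accept.
-/

section PrefixComp

variable {α : Type*} {T T' : ℕ → α → α → Prop}

/-- The relational composite of the first `N` members of a sequence of relations: `x` and `y` are
related when some path `x = r₀, r₁, …, r_N = y` makes its `m`-th step along `T m`. -/
def prefixComp (T : ℕ → α → α → Prop) : ℕ → α → α → Prop
  | 0 => Eq
  | N + 1 => Relation.Comp (prefixComp T N) (T N)

lemma prefixComp_congr {N : ℕ} (h : ∀ m < N, T m = T' m) : prefixComp T N = prefixComp T' N := by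
  induction N with
  | zero => rfl
  | succ N ih =>
    rw [prefixComp, prefixComp, ih fun m hm => h m (hm.trans N.lt_succ_self), h N N.lt_succ_self]

lemma prefixComp_add (T : ℕ → α → α → Prop) (M N : ℕ) :
    prefixComp T (M + N) =
      Relation.Comp (prefixComp T M) (prefixComp (fun m => T (M + m)) N) := by
  induction N with
  | zero => exact Relation.comp_eq.symm
  | succ N ih => rw [← add_assoc, prefixComp, ih, Relation.comp_assoc, prefixComp]

lemma prefixComp_mul (T : ℕ → α → α → Prop) (k n : ℕ) :
    prefixComp T (k * n) = prefixComp (fun i => prefixComp (fun m => T (i * n + m)) n) k := by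
  induction k with
  | zero => rw [zero_mul, prefixComp, prefixComp]
  | succ k ih => rw [Nat.succ_mul, prefixComp_add, ih, prefixComp]

lemma prefixComp_iff_exists_path {N : ℕ} {x y : α} :
    prefixComp T N x y ↔ ∃ r : Fin (N + 1) → α, r 0 = x ∧
      (∀ m : Fin N, T m (r m.castSucc) (r m.succ)) ∧ r (Fin.last N) = y := by
  induction N generalizing y with
  | zero => exact ⟨fun h => ⟨fun _ => x, rfl, nofun, h⟩, fun ⟨_, hx, _, hy⟩ => hx.symm.trans hy⟩
  | succ N ih =>
    constructor
    · rintro ⟨z, hxz, hzy⟩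
      obtain ⟨r, hr0, hr, rfl⟩ := ih.1 hxz
      refine ⟨Fin.snoc r y, ?_, Fin.lastCases ?_ fun m => ?_, Fin.snoc_last ..⟩
      · rwa [← Fin.castSucc_zero, Fin.snoc_castSucc]
      · rwa [Fin.snoc_castSucc, Fin.succ_last, Fin.snoc_last]
      · rw [Fin.snoc_castSucc, Fin.succ_castSucc, Fin.snoc_castSucc]
        exact hr m
    · rintro ⟨r, hr0, hr, rfl⟩
      exact ⟨r (Fin.last N).castSucc,
        ih.2 ⟨fun m => r m.castSucc, hr0, fun m => hr m.castSucc, rfl⟩, hr (Fin.last N)⟩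

/-- Here `s` lists the inner nodes of a path with `k + 1` steps. Once they are fixed, the steps
decouple: each has its own start node and its own target condition. -/
lemma exists_prefixComp_succ_iff {k : ℕ} {x : α} {A : α → Prop} :
    (∃ z, prefixComp T (k + 1) x z ∧ A z) ↔
      ∃ s : Fin k → α, ∀ i : Fin (k + 1), ∃ z,
        T i (Fin.cons (α := fun _ => α) x s i) z ∧
          Fin.snoc (α := fun _ => α → Prop) (fun j => (· = s j)) A i z := by
  simp only [prefixComp, Relation.Comp, prefixComp_iff_exists_path, Fin.exists_fin_succ_pi,
    Fin.forall_fin_succ', Fin.cons_zero, Fin.cons_succ, Fin.snoc_castSucc, Fin.snoc_last,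
    Fin.val_castSucc, Fin.val_last, exists_eq_right]
  constructor
  · rintro ⟨z, ⟨_, ⟨_, s, rfl, hs, rfl⟩, hz⟩, hA⟩
    exact ⟨s, hs, z, hz, hA⟩
  · rintro ⟨s, hs, z, hz, hA⟩
    exact ⟨z, ⟨_, ⟨x, s, rfl, hs, rfl⟩, hz⟩, hA⟩

end PrefixComp

namespace KNOBDD

variable {n k w : ℕ}

/-- Acceptance of an input by a branching program: some run from the start node follows edges
consistent with `ν` and ends in an accepting node. -/
def Accepts (P : KNOBDD n k w) (ν : Fin n → Bool) : Prop :=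
  ∃ run : Fin (k * n + 1) → Fin w,
    run 0 = P.start ∧
    (∀ m : Fin (k * n), P.trans m (run m.castSucc) (ν (varIdx k P.order m)) (run m.succ)) ∧
    P.accept (run (Fin.last (k * n)))

/-- The edges out of level `m` that are consistent with the input `ν`, as a relation on nodes.
Levels are indexed by `ℕ`, with no edges from level `k * n` on. -/
def step (P : KNOBDD n k w) (ν : Fin n → Bool) (m : ℕ) (a b : Fin w) : Prop :=
  ∃ h : m < k * n, P.trans ⟨m, h⟩ a (ν (varIdx k P.order ⟨m, h⟩)) b

/-- The `i`-th of the `k` passes of a branching program over the variables, as a program of its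
own with prescribed start node and accepting nodes. -/
def layer (P : KNOBDD n k w) (i : Fin k) (start : Fin w) (accept : Fin w → Prop) :
    KNOBDD n 1 w where
  order := P.order
  trans m := P.trans (finProdFinEquiv (i, m.cast (one_mul n)))
  start := start
  accept := accept

/-- The `i`-th layer with its interface read off a guess `s` of the nodes on the `k` boundaries
between consecutive layers: it starts at the node guessed for its left boundary and accepts only
the node guessed for its right boundary. The outer layers keep the start node and the accepting
nodes of the whole program. -/
def guessedLayer (P : KNOBDD n (k + 1) w) (s : Fin k → Fin w) (i : Fin (k + 1)) :
    KNOBDD n 1 w :=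
  P.layer i (Fin.cons (α := fun _ => Fin w) P.start s i)
    (Fin.snoc (α := fun _ => Fin w → Prop) (fun j => (· = s j)) P.accept i)

lemma step_val_iff (P : KNOBDD n k w) (ν : Fin n → Bool) (m : Fin (k * n)) {a b : Fin w} :
    P.step ν m a b ↔ P.trans m a (ν (varIdx k P.order m)) b :=
  exists_prop_of_true m.isLt

lemma accepts_iff_prefixComp (P : KNOBDD n k w) (ν : Fin n → Bool) :
    P.Accepts ν ↔ ∃ z, prefixComp (P.step ν) (k * n) P.start z ∧ P.accept z := by
  simp only [Accepts, prefixComp_iff_exists_path, step_val_iff]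
  constructor
  · rintro ⟨run, h_start, h_step, h_accept⟩
    exact ⟨_, ⟨run, h_start, h_step, rfl⟩, h_accept⟩
  · rintro ⟨_, ⟨run, h_start, h_step, rfl⟩, h_accept⟩
    exact ⟨run, h_start, h_step, h_accept⟩

lemma varIdx_finProdFinEquiv (θ : Equiv.Perm (Fin n)) (i : Fin k) (m : Fin (1 * n)) :
    varIdx k θ (finProdFinEquiv (i, m.cast (one_mul n))) = varIdx 1 θ m := by
  simp [varIdx]

lemma layer_step (P : KNOBDD n k w) (i : Fin k) (p : Fin w) (A : Fin w → Prop)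
    (ν : Fin n → Bool) (m : Fin (1 * n)) :
    (P.layer i p A).step ν m = P.step ν (i * n + m) := by
  have h_level : i * n + m = (finProdFinEquiv (i, m.cast (one_mul n))).val := by
    rw [finProdFinEquiv_apply_val, Fin.val_cast, mul_comm, add_comm]
  ext a b
  rw [h_level, step_val_iff, step_val_iff, varIdx_finProdFinEquiv]
  rfl

lemma layer_accepts_iff (P : KNOBDD n k w) (i : Fin k) (p : Fin w) (A : Fin w → Prop)
    (ν : Fin n → Bool) :
    (P.layer i p A).Accepts ν ↔
      ∃ z, prefixComp (fun m => P.step ν (i * n + m)) n p z ∧ A z := by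
  rw [accepts_iff_prefixComp,
    prefixComp_congr (T' := fun m => P.step ν (i * n + m))
      fun m hm => P.layer_step i p A ν ⟨m, hm⟩,
    one_mul]
  rfl

theorem accepts_iff_exists_forall_guessedLayer_accepts (P : KNOBDD n (k + 1) w)
    (ν : Fin n → Bool) :
    P.Accepts ν ↔ ∃ s : Fin k → Fin w, ∀ i, (P.guessedLayer s i).Accepts ν := by
  simp only [guessedLayer, layer_accepts_iff]
  rw [accepts_iff_prefixComp, prefixComp_mul, exists_prefixComp_succ_iff]

end KNOBDD

/-- **Decomposition of nondeterministic ordered read-`k`-times branching programs.**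
If `f : {0,1}^n → {0,1}` is computed by a `k`-NOBDD of width `w` with order `θ`, then
there are `d` with `1 ≤ d ≤ w^(k-1)` and Boolean functions `g j i` (`j < d`, `i < k`),
each computed by an NOBDD of width `w` with the same order, such that
`f(ν) = ⋁_j ⋀_i g j i (ν)` for all inputs `ν`. -/
theorem knobdd_decomposition (n k w : ℕ) (hk : 1 ≤ k) (hw : 1 ≤ w)
    (f : (Fin n → Bool) → Bool) (P : KNOBDD n k w) (hP : P.Computes f) :
    ∃ d : ℕ, 1 ≤ d ∧ d ≤ w ^ (k - 1) ∧
      ∃ g : Fin d → Fin k → (Fin n → Bool) → Bool,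
        (∀ j i, ∃ Q : KNOBDD n 1 w, Q.order = P.order ∧ Q.Computes (g j i)) ∧
        (∀ ν : Fin n → Bool, (f ν = true ↔ ∃ j : Fin d, ∀ i : Fin k, g j i ν = true)) := by
  classical
  obtain ⟨k, rfl⟩ := Nat.exists_eq_add_of_le' hk
  let guess : Fin (w ^ k) ≃ (Fin k → Fin w) := finFunctionFinEquiv.symm
  refine ⟨w ^ k, Nat.one_le_pow _ _ hw, le_rfl,
    fun j i ν => decide ((P.guessedLayer (guess j) i).Accepts ν),
    fun j i => ⟨P.guessedLayer (guess j) i, rfl, fun ν => decide_eq_true_iff⟩, fun ν => ?_⟩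
  simp only [decide_eq_true_iff]
  calc f ν = true ↔ P.Accepts ν := hP ν
    _ ↔ ∃ s, ∀ i, (P.guessedLayer s i).Accepts ν :=
      P.accepts_iff_exists_forall_guessedLayer_accepts ν
    _ ↔ ∃ j, ∀ i, (P.guessedLayer (guess j) i).Accepts ν := guess.surjective.exists
end

section
/- Simulation theorem (Theorem 2): Let k ≥ 1, w ≥ 1 and let f : {0,1}^n → {0,1} be computed by a k-NOBDD of width w with order θ. Then f is computed by an NOBDD (i.e. a 1-NOBDD) of width at most w^{2k−1} with the same order θ. -/
/-!
Cut an accepting run of a `k`-NOBDD into its `k` passes over the input. Once the `k - 1` states at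
the cuts are known, the passes are independent of each other and read the same variables in the same
order, so a single pass can run all of them in parallel. The simulating NOBDD guesses the cut states
on its first edge, carries the guess along, and checks at the end that pass `i` has arrived where
pass `i + 1` was assumed to start. Its states are the `k` current states together with the `k - 1`
guessed ones, hence the width `w ^ (k + (k - 1))`.
-/

section Reach

variable {σ : Type*}

/-- `Reach R n a b` says that `b` is reachable from `a` in `n` steps of the time-dependent
relation `R`, the first step being taken at time `0`. -/
def Reach (R : ℕ → σ → σ → Prop) : ℕ → σ → σ → Prop
  | 0 => Eq
  | n + 1 => Relation.Comp (Reach R n) (R n)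

namespace Reach

theorem congr {R R' : ℕ → σ → σ → Prop} {n : ℕ} (h : ∀ m < n, R m = R' m) :
    Reach R n = Reach R' n := by
  induction n with
  | zero => rfl
  | succ n ih =>
    simp only [Reach, ih fun m hm => h m (hm.trans n.lt_succ_self), h n n.lt_succ_self]

theorem add (R : ℕ → σ → σ → Prop) (m n : ℕ) :
    Reach R (m + n) = Relation.Comp (Reach R m) (Reach (fun t => R (m + t)) n) := by
  induction n with
  | zero => exact (Relation.comp_eq).symm
  | succ n ih => rw [← Nat.add_assoc, Reach, ih, Relation.comp_assoc, Reach]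

theorem mul (R : ℕ → σ → σ → Prop) (n k : ℕ) :
    Reach R (n * k) = Reach (fun i => Reach (fun t => R (n * i + t)) n) k := by
  induction k with
  | zero => rfl
  | succ k ih => rw [Nat.mul_succ, add, ih, Reach]

theorem iff_exists_fin {R : ℕ → σ → σ → Prop} {n : ℕ} {a b : σ} :
    Reach R n a b ↔ ∃ c : Fin (n + 1) → σ, c 0 = a ∧
      (∀ i : Fin n, R i (c i.castSucc) (c i.succ)) ∧ c (Fin.last n) = b := by
  induction n generalizing b with
  | zero =>
    refine ⟨fun h => ⟨fun _ => a, rfl, fun i => i.elim0, h⟩, ?_⟩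
    rintro ⟨c, rfl, -, rfl⟩
    rfl
  | succ n ih =>
    constructor
    · rintro ⟨d, hd, hdb⟩
      obtain ⟨c, rfl, hc, rfl⟩ := ih.mp hd
      refine ⟨Fin.snoc c b, Fin.snoc_castSucc (α := fun _ => σ) b c 0, ?_, Fin.snoc_last _ _⟩
      refine Fin.lastCases ?_ fun i => ?_
      · simpa using hdb
      · simpa [← Fin.castSucc_succ] using hc i
    · rintro ⟨c, rfl, hc, rfl⟩
      exact ⟨_, ih.mpr ⟨fun i => c i.castSucc, rfl, fun i => hc i.castSucc, rfl⟩, hc (Fin.last n)⟩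

theorem pi_iff {ι : Type*} {τ : ι → Type*} {R : ∀ i, ℕ → τ i → τ i → Prop} {n : ℕ}
    {a b : ∀ i, τ i} :
    Reach (fun t s s' => ∀ i, R i t (s i) (s' i)) n a b ↔ ∀ i, Reach (R i) n (a i) (b i) := by
  induction n generalizing b with
  | zero => exact funext_iff
  | succ n ih => simp only [Reach, Relation.Comp, ih, ← forall_and, Classical.skolem]

theorem equiv_iff {τ : Type*} (e : σ ≃ τ) {R : ℕ → τ → τ → Prop} {n : ℕ} {a b : σ} :
    Reach (fun t s s' => R t (e s) (e s')) n a b ↔ Reach R n (e a) (e b) := by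
  induction n generalizing b with
  | zero => exact e.apply_eq_iff_eq.symm
  | succ n ih => simp only [Reach, Relation.Comp, ih, e.surjective.exists]

end Reach

/-- The step at time `m` of a system that carries a guess in `γ` next to its state in `σ`. At time
`0` the present state and guess are discarded: a guess `g` is chosen, and the step of `R` departs
from `init g`. Later steps are those of `R` and keep the guess. -/
def guessStep {γ : Type*} (init : γ → σ) (R : σ → σ → Prop) : ℕ → σ × γ → σ × γ → Prop
  | 0, _, q' => R (init q'.2) q'.1
  | _ + 1, q, q' => q.2 = q'.2 ∧ R q.1 q'.1

theorem reach_guessStep_iff {γ : Type*} {init : γ → σ} {R : ℕ → σ → σ → Prop} {n : ℕ} (hn : n ≠ 0)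
    {q q' : σ × γ} :
    Reach (fun t => guessStep init (R t) t) n q q' ↔ Reach R n (init q'.2) q'.1 := by
  obtain ⟨n, rfl⟩ := Nat.exists_eq_succ_of_ne_zero hn
  clear hn
  induction n generalizing q' with
  | zero => simp [Reach, Relation.Comp, guessStep]
  | succ n ih =>
    constructor
    · rintro ⟨⟨s, _⟩, hs, rfl, hstep⟩
      exact ⟨s, ih.mp hs, hstep⟩
    · rintro ⟨s, hs, hstep⟩
      exact ⟨(s, q'.2), ih.mpr hs, rfl, hstep⟩

theorem reach_succ_iff_exists_cuts {R : ℕ → σ → σ → Prop} {K : ℕ} {a b : σ} :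
    Reach R (K + 1) a b ↔ ∃ g : Fin K → σ, ∀ i : Fin (K + 1),
      R i ((Fin.cons a g : Fin (K + 1) → σ) i) ((Fin.snoc g b : Fin (K + 1) → σ) i) := by
  rw [Reach.iff_exists_fin]
  constructor
  · rintro ⟨c, rfl, hc, rfl⟩
    refine ⟨fun i => c i.castSucc.succ, fun i => ?_⟩
    convert hc i using 1
    · cases i using Fin.cases <;> simp
    · cases i using Fin.lastCases <;> simp
  · rintro ⟨g, hg⟩
    refine ⟨Fin.cons a (Fin.snoc g b), rfl, fun i => ?_, by simp [← Fin.succ_last]⟩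
    convert hg i using 1
    · rw [Fin.cons_snoc_eq_snoc_cons, Fin.snoc_castSucc]
    · rw [Fin.cons_succ]

theorem reach_mul_succ_iff_exists_guess {R : ℕ → σ → σ → Prop} {n K : ℕ} {a b : σ} :
    Reach R (n * (K + 1)) a b ↔ ∃ g : Fin K → σ,
      Reach (fun t => guessStep (Fin.cons a)
          (fun s s' => ∀ i : Fin (K + 1), R (n * i + t) (s i) (s' i)) t)
        n (fun _ => a, fun _ => a) (Fin.snoc g b, g) := by
  rcases eq_or_ne n 0 with rfl | hn
  · rw [Nat.zero_mul]
    constructor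
    · rintro rfl
      refine ⟨fun _ => a, Prod.ext (funext fun i => ?_) rfl⟩
      cases i using Fin.lastCases <;> simp
    · rintro ⟨g, hg⟩
      simpa [Reach] using congrFun (congrArg Prod.fst hg) (Fin.last K)
  · simp only [Reach.mul, reach_succ_iff_exists_cuts, reach_guessStep_iff hn]
    exact exists_congr fun g => Reach.pi_iff.symm

end Reach

theorem varIdx_congr {n k l : ℕ} (θ : Equiv.Perm (Fin n)) {m : Fin (k * n)} {m' : Fin (l * n)}
    (h : (m : ℕ) ≡ m' [MOD n]) : varIdx k θ m = varIdx l θ m' :=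
  congrArg θ (Fin.ext h)

section LevelStep

variable {n k : ℕ} {σ : Type*}

/-- The step from level `m` to level `m + 1` of a branching program on input `ν`. Levels are indexed
by `ℕ`; there are no steps from level `k * n` onwards. -/
def levelStep (θ : Equiv.Perm (Fin n)) (trans : Fin (k * n) → σ → Bool → σ → Prop)
    (ν : Fin n → Bool) (m : ℕ) (a b : σ) : Prop :=
  ∃ h : m < k * n, trans ⟨m, h⟩ a (ν (varIdx k θ ⟨m, h⟩)) b

theorem levelStep_fin_iff {θ : Equiv.Perm (Fin n)} {trans : Fin (k * n) → σ → Bool → σ → Prop}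
    {ν : Fin n → Bool} (m : Fin (k * n)) {a b : σ} :
    levelStep θ trans ν m a b ↔ trans m a (ν (varIdx k θ m)) b :=
  exists_prop_of_true m.isLt

end LevelStep

namespace KNOBDD

variable {n k w : ℕ}

theorem computes_iff_reach {P : KNOBDD n k w} {f : (Fin n → Bool) → Bool} :
    P.Computes f ↔ ∀ ν, f ν = true ↔
      ∃ b, Reach (levelStep P.order P.trans ν) (k * n) P.start b ∧ P.accept b := by
  refine forall_congr' fun ν => iff_congr Iff.rfl ?_
  simp only [Reach.iff_exists_fin, levelStep_fin_iff]
  constructor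
  · rintro ⟨run, hstart, hrun, haccept⟩
    exact ⟨_, ⟨run, hstart, hrun, rfl⟩, haccept⟩
  · rintro ⟨_, ⟨run, hstart, hrun, rfl⟩, haccept⟩
    exact ⟨run, hstart, hrun, haccept⟩

theorem exists_computes_of_card_eq {σ : Type*} [Fintype σ] (hσ : Fintype.card σ = w)
    (θ : Equiv.Perm (Fin n)) (trans : Fin (k * n) → σ → Bool → σ → Prop) (start : σ)
    (accept : σ → Prop) {f : (Fin n → Bool) → Bool}
    (hf : ∀ ν, f ν = true ↔ ∃ b, Reach (levelStep θ trans ν) (k * n) start b ∧ accept b) :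
    ∃ Q : KNOBDD n k w, Q.order = θ ∧ Q.Computes f := by
  let e : Fin w ≃ σ := (Fintype.equivFinOfCardEq hσ).symm
  refine ⟨⟨θ, fun m a x b => trans m (e a) x (e b), e.symm start, fun a => accept (e a)⟩, rfl,
    computes_iff_reach.mpr fun ν => ?_⟩
  rw [hf, e.surjective.exists]
  refine exists_congr fun b => and_congr_left fun _ => ?_
  have hreach := Reach.equiv_iff e (R := levelStep θ trans ν) (n := k * n) (a := e.symm start)
    (b := b)
  rw [e.apply_symm_apply] at hreach
  exact hreach.symm

/-- The transitions of the one-pass program that simulates `P`: its states are the current states of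
the `K + 1` passes, run in parallel, and the guessed starting states of all passes but the first. -/
def parallelTrans {K : ℕ} (P : KNOBDD n (K + 1) w) (m : Fin (1 * n))
    (q : (Fin (K + 1) → Fin w) × (Fin K → Fin w)) (x : Bool)
    (q' : (Fin (K + 1) → Fin w) × (Fin K → Fin w)) : Prop :=
  guessStep (Fin.cons P.start)
    (fun s s' => ∀ i, P.trans (finProdFinEquiv (i, m.cast n.one_mul)) (s i) x (s' i)) m q q'

theorem levelStep_parallelTrans {K : ℕ} (P : KNOBDD n (K + 1) w) (ν : Fin n → Bool) {m : ℕ}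
    (hm : m < 1 * n) :
    levelStep P.order P.parallelTrans ν m = guessStep (Fin.cons P.start)
      (fun s s' => ∀ i : Fin (K + 1),
        levelStep P.order P.trans ν (n * i + m) (s i) (s' i)) m := by
  have hblock (i : Fin (K + 1)) (a b : Fin w) :
      levelStep P.order P.trans ν (n * i + m) a b ↔
        P.trans (finProdFinEquiv (i, ⟨m, n.one_mul ▸ hm⟩)) a
          (ν (varIdx 1 P.order ⟨m, hm⟩)) b := by
    have hvar : varIdx (K + 1) P.order (finProdFinEquiv (i, ⟨m, n.one_mul ▸ hm⟩)) =
        varIdx 1 P.order ⟨m, hm⟩ :=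
      varIdx_congr _ (by simp [Nat.ModEq])
    rw [← hvar, ← levelStep_fin_iff (trans := P.trans), finProdFinEquiv_apply_val,
      Nat.add_comm (n * i)]
  funext q q'
  simp only [hblock]
  exact propext (levelStep_fin_iff ⟨m, hm⟩)

theorem reach_iff_exists_reach_parallelTrans {K : ℕ} (P : KNOBDD n (K + 1) w) (ν : Fin n → Bool)
    {b : Fin w} :
    Reach (levelStep P.order P.trans ν) ((K + 1) * n) P.start b ↔ ∃ g : Fin K → Fin w,
      Reach (levelStep P.order P.parallelTrans ν) (1 * n)
        (fun _ => P.start, fun _ => P.start) (Fin.snoc g b, g) := by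
  rw [Reach.congr fun _ hm => P.levelStep_parallelTrans ν hm, n.one_mul, Nat.mul_comm]
  exact reach_mul_succ_iff_exists_guess

end KNOBDD

/-- **Simulation theorem.** If `f : {0,1}^n → {0,1}` is computed by a `k`-NOBDD of width `w`
with order `θ`, then `f` is computed by an NOBDD (a `1`-NOBDD) of width at most `w^(2k-1)`
with the same order `θ`. -/
theorem knobdd_simulation (n k w : ℕ) (hk : 1 ≤ k) (hw : 1 ≤ w)
    (f : (Fin n → Bool) → Bool) (P : KNOBDD n k w) (hP : P.Computes f) :
    ∃ Q : KNOBDD n 1 (w ^ (2 * k - 1)), Q.order = P.order ∧ Q.Computes f := by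
  obtain ⟨K, rfl⟩ := Nat.exists_eq_add_of_le' hk
  have hcard : Fintype.card ((Fin (K + 1) → Fin w) × (Fin K → Fin w)) = w ^ (2 * (K + 1) - 1) := by
    simp only [Fintype.card_prod, Fintype.card_fun, Fintype.card_fin, ← pow_add]
    congr 1
    omega
  refine KNOBDD.exists_computes_of_card_eq hcard P.order P.parallelTrans
    (fun _ => P.start, fun _ => P.start) (fun q => ∃ b, q.1 = Fin.snoc q.2 b ∧ P.accept b)
    fun ν => (KNOBDD.computes_iff_reach.mp hP ν).trans ?_
  simp only [P.reach_iff_exists_reach_parallelTrans ν]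
  constructor
  · rintro ⟨b, ⟨g, hreach⟩, haccept⟩
    exact ⟨_, hreach, b, rfl, haccept⟩
  · rintro ⟨⟨s, g⟩, hreach, b, hs : s = Fin.snoc g b, haccept⟩
    subst hs
    exact ⟨b, ⟨g, hreach⟩, haccept⟩
end

section
/- Lower bound for shuffled equality against k-NOBDDs (content of Lemma peq2_knobdd, concrete form): Let d be a multiple of 4 with 4 ≤ d ≤ min(n, 2^{n/4}), let k ≥ 1, w ≥ 1, and suppose some k-NOBDD of width w (with any order θ) computes EQS_d : {0,1}^n → {0,1}. Then w^{2k−1} > 2^{d/4} − 1. -/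
/-- The `j`-th bit (0-based) of an input `ν ∈ {0,1}^n`, or `false` if out of range. -/
def bitOf {n : ℕ} (ν : Fin n → Bool) (j : ℕ) : Bool :=
  if h : j < n then ν ⟨j, h⟩ else false

/-- The string of value bits (bits at 1-based even positions `2i`) whose corresponding
marker bit (at 1-based odd position `2i-1`) equals `mark`, for `1 ≤ i ≤ d/2`, in order. -/
def eqsPart {n : ℕ} (d : ℕ) (mark : Bool) (ν : Fin n → Bool) : List Bool :=
  ((List.range (d / 2)).filter (fun i => bitOf ν (2 * i) == mark)).map
    (fun i => bitOf ν (2 * i + 1))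

/-- The shuffled equality function `EQS_d : {0,1}^n → {0,1}`: the value is `1` iff the string
`α(ν)` of value bits with marker `0` equals the string `β(ν)` of value bits with marker `1`. -/
def EQS (n d : ℕ) (ν : Fin n → Bool) : Bool :=
  decide (eqsPart d false ν = eqsPart d true ν)

/-!
Cut every layer of the program after its first `t` queries. Together with the boundaries between
consecutive layers this gives `2k - 1` cuts, and the nodes that a run visits there form one of
`w ^ (2k - 1)` tuples. If accepting runs on two inputs give the same tuple, they can be spliced, so
the program also accepts the input that copies the variables queried before the cut from one input
and the remaining variables from the other. A fooling set for this partition of the variables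
therefore has at most `w ^ (2k - 1)` elements.

For `EQS`, choose `t` so that exactly half of the `d / 2` value bits are queried before the cut, and
let the markers put those value bits into `α` and the others into `β`. The inputs with `α = β`
are then determined by an arbitrary string of length `d / 4`, and they form a fooling set.
-/

section Counting

theorem exists_card_filter_lt_eq {ι α : Type*} [Fintype ι] [LinearOrder α] {g : ι → α}
    (hg : Function.Injective g) {c : ℕ} (hc : c < Fintype.card ι) :
    ∃ i, Finset.card {j | g j < g i} = c := by
  let _ : LinearOrder ι := LinearOrder.lift' g hg
  let e : Fin (Fintype.card ι) ≃o ι := Fintype.orderIsoFinOfCardEq ι rfl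
  refine ⟨e ⟨c, hc⟩, ?_⟩
  have below_eq_map : ({j | g j < g (e ⟨c, hc⟩)} : Finset ι) =
      (Finset.Iio ⟨c, hc⟩).map e.toEquiv.toEmbedding := by
    ext j
    obtain ⟨a, rfl⟩ := e.surjective j
    have map_lt_map_iff : g (e a) < g (e ⟨c, hc⟩) ↔ a < ⟨c, hc⟩ := e.lt_iff_lt
    simp [map_lt_map_iff]
  rw [below_eq_map, Finset.card_map, Fin.card_Iio]

theorem count_eq_card_filter_fin (p : ℕ → Prop) [DecidablePred p] (m : ℕ) :
    Nat.count p m = Finset.card {j : Fin m | p j} := by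
  rw [Nat.count_eq_card_filter_range, Finset.card_filter, Finset.card_filter,
    Fin.sum_univ_eq_sum_range (fun j => if p j then 1 else 0)]

theorem count_eq_false_add_count_eq_true (mark : ℕ → Bool) (m : ℕ) :
    Nat.count (mark · = false) m + Nat.count (mark · = true) m = m := by
  simpa [Nat.count_eq_card_filter_range] using
    Finset.card_filter_add_card_filter_not (s := Finset.range m) (mark · = false)

theorem map_count_filter_range {β : Type*} (p : ℕ → Prop) [DecidablePred p] (x : ℕ → β) (m : ℕ) :
    ((List.range m).filter p).map (fun j => x (Nat.count p j)) =
      (List.range (Nat.count p m)).map x := by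
  induction m with
  | zero => simp
  | succ m ih =>
    by_cases h : p m <;>
      simp [List.range_succ, Nat.count_succ, List.filter_append, h, ih]

end Counting

section Splicing

variable {n k w : ℕ}

/-- The variables that a layer with order `θ` queries at its first `t` levels. -/
def readBefore (θ : Equiv.Perm (Fin n)) (t : Fin n) : Finset (Fin n) := {i | θ.symm i < t}

theorem varIdx_mem_readBefore {θ : Equiv.Perm (Fin n)} {t : Fin n} {m : Fin (k * n)} :
    varIdx k θ m ∈ readBefore θ t ↔ (m : ℕ) % n < t := by
  simp only [readBefore, varIdx, Finset.mem_filter_univ, Equiv.symm_apply_apply, Fin.lt_def]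

namespace KNOBDD

variable {P : KNOBDD n k w} {ν μ : Fin n → Bool} {r s : Fin (k * n + 1) → Fin w}

/-- `run` is a path of `P` from the start node to an accepting node consistent with `ν`: the
condition whose satisfiability defines `KNOBDD.Computes`. -/
structure IsAcceptingRun (P : KNOBDD n k w) (ν : Fin n → Bool) (run : Fin (k * n + 1) → Fin w) :
    Prop where
  start : run 0 = P.start
  step (m : Fin (k * n)) : P.trans m (run m.castSucc) (ν (varIdx k P.order m)) (run m.succ)
  accept : P.accept (run (Fin.last (k * n)))

theorem Computes.eq_true_iff {f : (Fin n → Bool) → Bool} (hP : P.Computes f) :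
    f ν = true ↔ ∃ run, P.IsAcceptingRun ν run :=
  (hP ν).trans <| exists_congr fun _ =>
    ⟨fun ⟨start, step, accept⟩ => ⟨start, step, accept⟩, fun h => ⟨h.start, h.step, h.accept⟩⟩

/-- The run that follows `r` before the cut `t` of each layer and `s` after it. The final level
has residue `0` but belongs to the part after the cut of the last layer, hence to `s`. -/
def spliceRun (t : Fin n) (r s : Fin (k * n + 1) → Fin w) (m : Fin (k * n + 1)) : Fin w :=
  if (m : ℕ) % n < t ∧ (m : ℕ) < k * n then r m else s m

/-- The runs `r` and `s` visit the same node at every level, except possibly the final one, at which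
a layer begins or is cut at `t`. -/
def AgreeAtCuts (t : Fin n) (r s : Fin (k * n + 1) → Fin w) : Prop :=
  ∀ m : Fin (k * n + 1), (m : ℕ) < k * n → (m : ℕ) % n = 0 ∨ (m : ℕ) % n = t → r m = s m

theorem spliceRun_succ_of_lt {t : Fin n} (h : AgreeAtCuts t r s) {m : Fin (k * n)}
    (hm : (m : ℕ) % n < t) : spliceRun t r s m.succ = r m.succ := by
  have hmod : ((m : ℕ) + 1) % n = m % n + 1 := by
    rw [← Nat.mod_add_mod, Nat.mod_eq_of_lt (Nat.lt_of_le_of_lt hm t.isLt)]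
  have not_last : (m : ℕ) + 1 < k * n := by
    refine lt_of_le_of_ne m.isLt fun hlast => ?_
    simp [hlast] at hmod
  unfold spliceRun
  split_ifs with hbefore
  · rfl
  · refine (h _ not_last (.inr ?_)).symm
    simp only [Fin.val_succ] at hbefore ⊢
    omega

theorem spliceRun_succ_of_le {t : Fin n} (h : AgreeAtCuts t r s) {m : Fin (k * n)}
    (hm : (t : ℕ) ≤ (m : ℕ) % n) : spliceRun t r s m.succ = s m.succ := by
  unfold spliceRun
  split_ifs with hbefore
  · refine h _ hbefore.2 (.inl ?_)
    have hlt : ((m : ℕ) % n + 1) % n < t := by simpa using hbefore.1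
    rw [Fin.val_succ, ← Nat.mod_add_mod]
    rcases lt_or_eq_of_le (Nat.succ_le_of_lt (Nat.mod_lt m t.pos)) with hn | hn
    · rw [Nat.mod_eq_of_lt hn] at hlt
      omega
    · rw [← Nat.succ_eq_add_one, hn, Nat.mod_self]
  · rfl

theorem IsAcceptingRun.splice {t : Fin n} (hr : P.IsAcceptingRun ν r)
    (hs : P.IsAcceptingRun μ s) (h : AgreeAtCuts t r s) :
    P.IsAcceptingRun ((readBefore P.order t).piecewise ν μ) (spliceRun t r s) where
  start := by
    unfold spliceRun
    split_ifs
    exacts [hr.start, hs.start]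
  step m := by
    by_cases hm : (m : ℕ) % n < t
    · rw [spliceRun_succ_of_lt h hm, Finset.piecewise_eq_of_mem _ _ _ (varIdx_mem_readBefore.2 hm)]
      simpa [spliceRun, hm] using hr.step m
    · rw [spliceRun_succ_of_le h (not_lt.1 hm),
        Finset.piecewise_eq_of_notMem _ _ _ (mt varIdx_mem_readBefore.1 hm)]
      simpa [spliceRun, hm] using hs.step m
  accept := by simpa [spliceRun] using hs.accept

/-- The nodes of `run` at the cuts: at `t` in each of the `k` layers, and at the start of each layer
except the first, where all runs considered agree. These levels are at most `k * n`, so `Fin.ofNat`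
does not wrap around. -/
def signature (t : Fin n) (run : Fin (k * n + 1) → Fin w) :
    (Fin k → Fin w) × (Fin (k - 1) → Fin w) :=
  (fun q => run (Fin.ofNat _ (q * n + t)), fun q => run (Fin.ofNat _ ((q + 1) * n)))

theorem agreeAtCuts_of_signature_eq {t : Fin n} (h0 : r 0 = s 0)
    (h : signature t r = signature t s) : AgreeAtCuts t r s := by
  intro m hm hmod
  have hq : (m : ℕ) / n < k := Nat.div_lt_of_lt_mul (hm.trans_eq (mul_comm k n))
  have hdiv : (m : ℕ) / n * n + m % n = m := Nat.div_add_mod' m n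
  have levels_eq := Fin.ofNat_val_eq_self m
  obtain ⟨atCut, atStart⟩ := Prod.ext_iff.1 h
  rcases hmod with hmod | hmod
  · rcases Nat.eq_zero_or_pos ((m : ℕ) / n) with hq0 | hqpos
    · have hm0 : m = 0 := Fin.ext (by simpa [hq0, hmod] using hdiv.symm)
      rwa [hm0]
    · rw [hmod, add_zero] at hdiv
      have := congrFun atStart ⟨m / n - 1, by omega⟩
      simpa [signature, Nat.sub_add_cancel hqpos, hdiv, levels_eq] using this
  · have := congrFun atCut ⟨m / n, hq⟩
    simpa [signature, ← hmod, hdiv, levels_eq] using this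

theorem Computes.card_le_pow_of_fooling {ι : Type*} [Fintype ι] {f : (Fin n → Bool) → Bool}
    (hP : P.Computes f) (t : Fin n) (F : ι → Fin n → Bool) (hF : ∀ i, f (F i) = true)
    (fooling : ∀ i j, f ((readBefore P.order t).piecewise (F i) (F j)) = true →
      f ((readBefore P.order t).piecewise (F j) (F i)) = true → i = j) :
    Fintype.card ι ≤ w ^ (2 * k - 1) := by
  choose run hrun using fun i => hP.eq_true_iff.1 (hF i)
  have signature_injective : Function.Injective fun i => signature t (run i) := by
    intro i j hij
    have hstart : run i 0 = run j 0 := (hrun i).start.trans (hrun j).start.symm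
    exact fooling i j
      (hP.eq_true_iff.2 ⟨_, (hrun i).splice (hrun j) (agreeAtCuts_of_signature_eq hstart hij)⟩)
      (hP.eq_true_iff.2
        ⟨_, (hrun j).splice (hrun i) (agreeAtCuts_of_signature_eq hstart.symm hij.symm)⟩)
  calc Fintype.card ι ≤ Fintype.card ((Fin k → Fin w) × (Fin (k - 1) → Fin w)) :=
        Fintype.card_le_of_injective _ signature_injective
    _ = w ^ (k + (k - 1)) := by simp [pow_add]
    _ = w ^ (2 * k - 1) := by congr 1; omega

end KNOBDD

end Splicing

section ShuffledInputs

variable {n d : ℕ}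

/-- The input whose pair `j` has marker bit `mark j`, and whose value bits with marker `b` spell the
string `z b` in order. -/
def shuffledInput (mark : ℕ → Bool) (z : Bool → ℕ → Bool) (i : Fin n) : Bool :=
  let j := (i : ℕ) / 2
  if Even (i : ℕ) then mark j else z (mark j) (Nat.count (mark · = mark j) j)

theorem bitOf_shuffledInput_marker {j : ℕ} (hj : 2 * j < n) (mark : ℕ → Bool)
    (z : Bool → ℕ → Bool) : bitOf (n := n) (shuffledInput mark z) (2 * j) = mark j := by
  simp [bitOf, shuffledInput, hj]

theorem bitOf_shuffledInput_value {j : ℕ} (hj : 2 * j + 1 < n) (mark : ℕ → Bool)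
    (z : Bool → ℕ → Bool) :
    bitOf (n := n) (shuffledInput mark z) (2 * j + 1) =
      z (mark j) (Nat.count (mark · = mark j) j) := by
  have half : (2 * j + 1) / 2 = j := by omega
  simp [bitOf, shuffledInput, hj, half]

theorem eqsPart_shuffledInput (hdn : d ≤ n) (mark : ℕ → Bool) (z : Bool → ℕ → Bool) (b : Bool) :
    eqsPart (n := n) d b (shuffledInput mark z) =
      (List.range (Nat.count (mark · = b) (d / 2))).map (z b) := by
  have filter_marker : (List.range (d / 2)).filter
      (fun j => bitOf (n := n) (shuffledInput mark z) (2 * j) == b) =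
      (List.range (d / 2)).filter (mark · = b) := by
    refine List.filter_congr fun j hj => ?_
    rw [bitOf_shuffledInput_marker (by grind)]
    rfl
  rw [eqsPart, filter_marker, ← map_count_filter_range]
  refine List.map_congr_left fun j hj => ?_
  obtain ⟨hj, rfl⟩ : j < d / 2 ∧ mark j = b := by simpa using hj
  exact bitOf_shuffledInput_value (by omega) mark z

theorem EQS_shuffledInput_eq_true_iff (hdn : d ≤ n) {mark : ℕ → Bool} {c : ℕ}
    (hmark : ∀ b, Nat.count (mark · = b) (d / 2) = c) (z : Bool → ℕ → Bool) :
    EQS n d (shuffledInput mark z) = true ↔ ∀ i : Fin c, z false i = z true i := by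
  simp [EQS, eqsPart_shuffledInput hdn, hmark, Fin.forall_iff]

/-- The marking of pairs that puts the value bits lying in `S` into `α` and the others into `β`. -/
def markOutside (S : Finset (Fin n)) (j : ℕ) : Bool := decide (∀ i ∈ S, (i : ℕ) ≠ 2 * j + 1)

theorem markOutside_eq_false_iff {S : Finset (Fin n)} {j : ℕ} {i : Fin n}
    (hi : (i : ℕ) = 2 * j + 1) : markOutside S j = false ↔ i ∈ S := by
  simp [markOutside, ← hi, Fin.val_inj]

theorem piecewise_shuffledInput_markOutside (S : Finset (Fin n)) (z₁ z₂ : Bool → ℕ → Bool) :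
    S.piecewise (shuffledInput (markOutside S) z₁) (shuffledInput (markOutside S) z₂) =
      shuffledInput (markOutside S) (fun b => bif b then z₂ b else z₁ b) := by
  funext i
  by_cases hi : Even (i : ℕ)
  · simp [Finset.piecewise, shuffledInput, hi]
  · have hmark := markOutside_eq_false_iff (S := S) (j := i / 2) (i := i) (by grind)
    by_cases hS : i ∈ S <;> simp_all [Finset.piecewise, shuffledInput]

theorem exists_count_markOutside_readBefore_eq_false (θ : Equiv.Perm (Fin n)) {c m : ℕ}
    (hmn : 2 * m ≤ n) (hc : c < m) :
    ∃ t, Nat.count (markOutside (readBefore θ t) · = false) m = c := by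
  let value (j : Fin m) : Fin n := ⟨2 * j + 1, by omega⟩
  have value_injective : Function.Injective value := fun i j h => by
    simpa [value, Fin.val_inj] using h
  obtain ⟨j₀, hj₀⟩ := exists_card_filter_lt_eq (θ.symm.injective.comp value_injective)
    (by simpa using hc)
  refine ⟨θ.symm (value j₀), ?_⟩
  rw [count_eq_card_filter_fin, ← hj₀]
  congr! 2 with j
  rw [markOutside_eq_false_iff (i := value j) rfl]
  simp [readBefore]

theorem exists_forall_count_markOutside_readBefore (θ : Equiv.Perm (Fin n)) {c : ℕ} (hc : 0 < c)
    (hcn : 4 * c ≤ n) :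
    ∃ t, ∀ b, Nat.count (markOutside (readBefore θ t) · = b) (2 * c) = c := by
  obtain ⟨t, ht⟩ := exists_count_markOutside_readBefore_eq_false θ (c := c) (m := 2 * c)
    (by omega) (by omega)
  have := count_eq_false_add_count_eq_true (markOutside (readBefore θ t)) (2 * c)
  exact ⟨t, Bool.forall_bool.2 ⟨ht, by omega⟩⟩

end ShuffledInputs

theorem eqs_lower_bound_general {n d k w : ℕ} (hd4 : 4 ∣ d) (hd : 0 < d) (hdn : d ≤ n)
    (P : KNOBDD n k w) (hP : P.Computes (EQS n d)) : 2 ^ (d / 4) ≤ w ^ (2 * k - 1) := by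
  obtain ⟨t, balanced⟩ := exists_forall_count_markOutside_readBefore P.order (c := d / 4)
    (by omega) (by omega)
  rw [show 2 * (d / 4) = d / 2 by omega] at balanced
  let mark := markOutside (readBefore P.order t)
  let ext (x : Fin (d / 4) → Bool) : ℕ → Bool := Function.extend Fin.val x fun _ => false
  have EQS_iff (x y : Fin (d / 4) → Bool) :
      EQS n d (shuffledInput mark fun b => bif b then ext y else ext x) = true ↔ x = y := by
    rw [EQS_shuffledInput_eq_true_iff hdn balanced]
    simp [ext, funext_iff, Fin.val_injective.extend_apply]
  simpa using hP.card_le_pow_of_fooling t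
    (fun x => shuffledInput mark fun _ => ext x)
    (fun x => by simpa using (EQS_iff x x).2 rfl)
    (fun x y hxy _ => (EQS_iff x y).1 (by rwa [piecewise_shuffledInput_markOutside] at hxy))

/-- **Lower bound for shuffled equality against `k`-NOBDDs.** If some `k`-NOBDD of width `w`
(with any order) computes `EQS_d`, where `d` is a multiple of `4` with
`4 ≤ d ≤ min n 2^(n/4)`, then `w^(2k-1) > 2^(d/4) - 1`. -/
theorem eqs_lower_bound (n d k w : ℕ) (hd4 : d % 4 = 0) (hd : 4 ≤ d)
    (hdn : d ≤ n) (hd2 : d ≤ 2 ^ (n / 4)) (hk : 1 ≤ k) (hw : 1 ≤ w)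
    (P : KNOBDD n k w) (hP : P.Computes (EQS n d)) :
    2 ^ (d / 4) - 1 < w ^ (2 * k - 1) :=
  Nat.sub_one_lt_of_le (by positivity)
    (eqs_lower_bound_general (Nat.dvd_of_mod_eq_zero hd4) (by omega) hdn P hP)
end

section
/- Protocol simulation of k-NOBDDs (Lemma l1): Let f : {0,1}^n → {0,1} be computed by a k-NOBDD of width w ≥ 2 with order θ, and let l = ⌈log₂ w⌉. Then for every u with 1 ≤ u < n, letting π be the partition of the variables into X_A = {x_{θ(1)},…,x_{θ(u)}} and X_B = the remaining variables, the function f is computed by some (π, 2k−1, l) automata communication nondeterministic protocol. -/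
/-- Merge an assignment `σ` to the variables in `A` with an assignment `γ` to the
variables outside `A` into a full assignment. -/
def mergeAssign {n : ℕ} (A : Finset (Fin n)) (σ : {i : Fin n // i ∈ A} → Bool)
    (γ : {i : Fin n // i ∉ A} → Bool) : Fin n → Bool :=
  fun i => if h : i ∈ A then σ ⟨i, h⟩ else γ ⟨i, h⟩

/-- `N^π(f)`: the number of distinct subfunctions `γ ↦ f(σ,γ)` of `f` with respect to
the partition `π = (A, Aᶜ)` of the variables, as `σ` ranges over assignments to `A`. -/
def NsubA {n : ℕ} (f : (Fin n → Bool) → Bool) (A : Finset (Fin n)) : ℕ :=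
  (Finset.univ.image fun σ : {i : Fin n // i ∈ A} → Bool =>
    fun γ : {i : Fin n // i ∉ A} → Bool => f (mergeAssign A σ γ)).card

/-- A `(π, t, l)` automata communication nondeterministic protocol with partition
`π = (A, Aᶜ)`: `first` gives Alice's set of possible first messages; `nextA i` (for odd
rounds `i ≥ 3`) gives Alice's sets of messages depending on the previous message and her
input; `nextB i` (for even rounds `2 ≤ i ≤ t-1`) the same for Bob; `out` is Bob's output
after the last round `t`. Messages are strings in `{0,1}^l`. -/
structure NProtocol (n : ℕ) (A : Finset (Fin n)) (t l : ℕ) where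
  first : ({i : Fin n // i ∈ A} → Bool) → Set (Fin l → Bool)
  nextA : ℕ → (Fin l → Bool) → ({i : Fin n // i ∈ A} → Bool) → Set (Fin l → Bool)
  nextB : ℕ → (Fin l → Bool) → ({i : Fin n // i ∉ A} → Bool) → Set (Fin l → Bool)
  out : (Fin l → Bool) → ({i : Fin n // i ∉ A} → Bool) → Bool

/-- The protocol `P` computes `f`: on every input `(σ, γ)` split according to the
partition, `f(σ,γ) = 1` iff there is a chain of messages `m¹ ∈ μ¹(σ)`,
`m² ∈ μ²(m¹,γ)`, `m³ ∈ μ³(m²,σ)`, …, `mᵗ ∈ μᵗ(m^{t-1},σ)` with `out(mᵗ,γ) = 1`.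
(Message `m^{j+1}`, i.e. `ms (j+1)` below, belongs to round `j+2`, which is handled by
Bob when `j` is even and by Alice when `j` is odd.) -/
def NProtocol.Computes {n : ℕ} {A : Finset (Fin n)} {t l : ℕ} (P : NProtocol n A t l)
    (f : (Fin n → Bool) → Bool) : Prop :=
  ∀ (σ : {i : Fin n // i ∈ A} → Bool) (γ : {i : Fin n // i ∉ A} → Bool),
    (f (mergeAssign A σ γ) = true ↔
      ∃ ms : ℕ → (Fin l → Bool),
        ms 0 ∈ P.first σ ∧
        (∀ j : ℕ, j + 1 < t →
          if j % 2 = 0 then ms (j + 1) ∈ P.nextB (j + 2) (ms j) γ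
          else ms (j + 1) ∈ P.nextA (j + 2) (ms j) σ) ∧
        P.out (ms (t - 1)) γ = true)

/-- Paths in a leveled graph with node set `α` on every level, `R m` being the edge relation from
level `m` to level `m + 1`: `LevelPath R a b p q` says that node `p` of level `a` is joined to node
`q` of level `b`. Only the values of the witness `s` on `[a, b]` matter. -/
def LevelPath {α : Type*} (R : ℕ → α → α → Prop) (a b : ℕ) (p q : α) : Prop :=
  ∃ s : ℕ → α, s a = p ∧ s b = q ∧ ∀ m ∈ Set.Ico a b, R m (s m) (s (m + 1))

namespace LevelPath

variable {α : Type*} {R : ℕ → α → α → Prop} {a b c : ℕ} {p q r : α}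

theorem self_iff : LevelPath R a a p q ↔ p = q := by
  constructor
  · rintro ⟨s, rfl, rfl, -⟩
    rfl
  · rintro rfl
    exact ⟨fun _ => p, rfl, rfl, by simp⟩

theorem succ_iff : LevelPath R a (a + 1) p q ↔ R a p q := by
  constructor
  · rintro ⟨s, rfl, rfl, hs⟩
    exact hs a (by simp)
  · intro h
    refine ⟨fun m => if m = a then p else q, by simp, by simp, fun m hm => ?_⟩
    obtain rfl : m = a := by grind
    simpa using h

theorem trans (hab : a ≤ b) (hbc : b ≤ c) (hpq : LevelPath R a b p q)
    (hqr : LevelPath R b c q r) : LevelPath R a c p r := by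
  obtain ⟨s, hsa, hsb, hs⟩ := hpq
  obtain ⟨t, htb, htc, ht⟩ := hqr
  refine ⟨fun m => if m < b then s m else t m, ?_, ?_, fun m hm => ?_⟩
  · grind
  · grind
  · rcases lt_trichotomy (m + 1) b with h | h | h
    · simpa [h, show m < b by omega] using hs m (by grind)
    · have hlast := hs m (by grind)
      simpa [h, show m < b by omega, htb, hsb] using hlast
    · simpa [show ¬ m < b by omega, show ¬ m + 1 < b by omega] using ht m (by grind)

theorem split_iff (hab : a ≤ b) (hbc : b ≤ c) :
    LevelPath R a c p r ↔ ∃ q, LevelPath R a b p q ∧ LevelPath R b c q r := by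
  constructor
  · rintro ⟨s, rfl, rfl, hs⟩
    exact ⟨s b, ⟨s, rfl, rfl, fun m hm => hs m ⟨hm.1, hm.2.trans_le hbc⟩⟩,
      ⟨s, rfl, rfl, fun m hm => hs m ⟨hab.trans hm.1, hm.2⟩⟩⟩
  · rintro ⟨q, hpq, hqr⟩
    exact hpq.trans hab hbc hqr

theorem coarsen_iff {c : ℕ → ℕ} (hc : Monotone c) (N : ℕ) :
    LevelPath (fun j => LevelPath R (c j) (c (j + 1))) 0 N p q ↔
      LevelPath R (c 0) (c N) p q := by
  induction N generalizing q with
  | zero => simp only [self_iff]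
  | succ N ih =>
    rw [split_iff N.zero_le N.le_succ, split_iff (hc N.zero_le) (hc N.le_succ)]
    simp only [ih, succ_iff]

theorem exists_accepting_iff {accept : α → Prop} (T : ℕ) :
    (∃ q, LevelPath R 0 (T + 2) p q ∧ accept q) ↔
      ∃ r : ℕ → α, R 0 p (r 0) ∧ (∀ j < T, R (j + 1) (r j) (r (j + 1))) ∧
        ∃ q, R (T + 1) (r T) q ∧ accept q := by
  constructor
  · rintro ⟨q, ⟨s, rfl, rfl, hs⟩, hq⟩
    exact ⟨fun j => s (j + 1), hs 0 (by simp), fun j hj => hs (j + 1) (by grind),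
      s (T + 2), hs (T + 1) (by simp), hq⟩
  · rintro ⟨r, hfirst, hmid, q, hlast, hq⟩
    have hmid' : LevelPath R 1 (T + 1) (r 0) (r T) := by
      refine ⟨fun m => r (m - 1), rfl, rfl, fun m hm => ?_⟩
      obtain ⟨j, rfl⟩ := Nat.exists_eq_add_of_le' hm.1
      exact hmid j (Nat.lt_of_succ_lt_succ hm.2)
    exact ⟨q, ((succ_iff.mpr hfirst).trans (by omega) (by omega) hmid').trans
      (by omega) (by omega) (succ_iff.mpr hlast), hq⟩

theorem dependsOn {ι : Type*} {β : ι → Type*} {S : ℕ → (∀ i, β i) → α → α → Prop} {s : Set ι}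
    (hS : ∀ m ∈ Set.Ico a b, DependsOn (S m) s) :
    DependsOn (fun ν => LevelPath (S · ν) a b) s := by
  intro ν ν' hν
  ext p q
  have hedge : ∀ m ∈ Set.Ico a b, S m ν = S m ν' := fun m hm => hS m hm hν
  simp +contextual only [LevelPath, hedge]

end LevelPath

section MergeAssign

variable {n : ℕ} {A : Finset (Fin n)} {β : Type*} {g : (Fin n → Bool) → β}

theorem apply_mergeAssign_eq_of_dependsOn (hg : DependsOn g A) (σ : {i : Fin n // i ∈ A} → Bool)
    (γ γ' : {i : Fin n // i ∉ A} → Bool) :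
    g (mergeAssign A σ γ) = g (mergeAssign A σ γ') :=
  hg fun i (hi : i ∈ A) => by simp only [mergeAssign, hi, dite_true]

theorem apply_mergeAssign_eq_of_dependsOn_compl (hg : DependsOn g (A : Set (Fin n))ᶜ)
    (σ σ' : {i : Fin n // i ∈ A} → Bool) (γ : {i : Fin n // i ∉ A} → Bool) :
    g (mergeAssign A σ γ) = g (mergeAssign A σ' γ) :=
  hg fun i (hi : i ∉ A) => by simp only [mergeAssign, hi, dite_false]

end MergeAssign

namespace NProtocol

variable {n t l : ℕ} {A : Finset (Fin n)} {α : Type*} {d : (Fin l → Bool) → α}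
  {S : ℕ → (Fin n → Bool) → α → α → Prop} {start : α} {accept : α → Prop}

open Classical in
/-- The protocol guessing a path from `start` to an accepting node through the blocks
`S 0, S 1, …`, where Alice handles the even and Bob the odd blocks; the message of round `i` is a
code under `d` of the node reached after block `i - 1`. A party fills in the variables it does not
know by `false`, which is harmless when its blocks do not depend on them. The last block is
`t - 1 + 1` and not `t`: with truncated subtraction, `t = 0` still has a first message. -/
noncomputable def ofBlocks (A : Finset (Fin n)) (t : ℕ) (d : (Fin l → Bool) → α)
    (S : ℕ → (Fin n → Bool) → α → α → Prop) (start : α) (accept : α → Prop) :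
    NProtocol n A t l where
  first σ := {m | S 0 (mergeAssign A σ fun _ => false) start (d m)}
  nextA i m σ := {m' | S (i - 1) (mergeAssign A σ fun _ => false) (d m) (d m')}
  nextB i m γ := {m' | S (i - 1) (mergeAssign A (fun _ => false) γ) (d m) (d m')}
  out m γ := ∃ q, S (t - 1 + 1) (mergeAssign A (fun _ => false) γ) (d m) q ∧ accept q

theorem computes_ofBlocks {f : (Fin n → Bool) → Bool} (ht : Even (t - 1))
    (hd : Function.Surjective d) (hA : ∀ j, Even j → DependsOn (S j) A)
    (hB : ∀ j, ¬ Even j → DependsOn (S j) (A : Set (Fin n))ᶜ)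
    (hf : ∀ ν, f ν = true ↔ ∃ q, LevelPath (S · ν) 0 (t - 1 + 2) start q ∧ accept q) :
    (ofBlocks A t d S start accept).Computes f := by
  intro σ γ
  have alice : ∀ j, Even j →
      S j (mergeAssign A σ fun _ => false) = S j (mergeAssign A σ γ) :=
    fun j hj => apply_mergeAssign_eq_of_dependsOn (hA j hj) ..
  have bob : ∀ j, ¬ Even j →
      S j (mergeAssign A (fun _ => false) γ) = S j (mergeAssign A σ γ) :=
    fun j hj => apply_mergeAssign_eq_of_dependsOn_compl (hB j hj) ..
  rw [hf, LevelPath.exists_accepting_iff, hd.comp_left.exists]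
  refine exists_congr fun ms => and_congr ?_ (and_congr ?_ ?_)
  · simp [ofBlocks, alice 0 (by simp)]
  · refine forall_congr' fun j => imp_congr (by omega) ?_
    split_ifs with hj
    · simp [ofBlocks, bob (j + 1) (by grind)]
    · simp [ofBlocks, alice (j + 1) (by grind)]
  · simp [ofBlocks, bob (t - 1 + 1) (by grind)]

end NProtocol

namespace KNOBDD

variable {n k w : ℕ}

/-- The edge relation of `P` on input `ν` between levels `m` and `m + 1` (counted from `0`); it is
empty for `m` beyond the last level. -/
def Step (P : KNOBDD n k w) (m : ℕ) (ν : Fin n → Bool) (p q : Fin w) : Prop :=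
  ∃ h : m < k * n, P.trans ⟨m, h⟩ p (ν (varIdx k P.order ⟨m, h⟩)) q

theorem computes_iff_levelPath {P : KNOBDD n k w} {f : (Fin n → Bool) → Bool} :
    P.Computes f ↔ ∀ ν, f ν = true ↔
      ∃ q, LevelPath (P.Step · ν) 0 (k * n) P.start q ∧ P.accept q := by
  refine forall_congr' fun ν => iff_congr Iff.rfl ?_
  constructor
  · rintro ⟨run, hstart, hrun, hacc⟩
    have ofNat_eq {m : ℕ} (hm : m < k * n + 1) : Fin.ofNat (k * n + 1) m = ⟨m, hm⟩ :=
      Fin.ext (Nat.mod_eq_of_lt hm)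
    refine ⟨run (Fin.last _), ⟨fun m => run (Fin.ofNat _ m), hstart, ?_, ?_⟩, hacc⟩
    · exact congrArg run (ofNat_eq (Nat.lt_succ_self _))
    · rintro m ⟨-, hm⟩
      beta_reduce
      rw [ofNat_eq (Nat.lt_succ_of_lt hm), ofNat_eq (Nat.succ_lt_succ hm)]
      exact ⟨hm, hrun ⟨m, hm⟩⟩
  · rintro ⟨_, ⟨s, hstart, rfl, hs⟩, hacc⟩
    exact ⟨fun m => s m, hstart, fun m => (hs m (by simp)).2, hacc⟩

theorem dependsOn_step {P : KNOBDD n k w} {m : ℕ} {s : Set (Fin n)}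
    (hs : ∀ h : m < k * n, varIdx k P.order ⟨m, h⟩ ∈ s) : DependsOn (P.Step m) s := by
  intro ν ν' hν
  ext p q
  exact exists_congr fun h => by rw [hν _ (hs h)]

end KNOBDD

theorem symm_varIdx {n k : ℕ} (θ : Equiv.Perm (Fin n)) (m : Fin (k * n)) :
    (θ.symm (varIdx k θ m) : ℕ) = m % n := by
  simp [varIdx]

/-- The level at which block `j` starts when each of the `k` layers of length `n` is cut after its
first `u` levels. Capping at `k * n` makes all blocks from `2 * k` on empty. -/
def cutLevel (n k u j : ℕ) : ℕ := min (j / 2 * n + j % 2 * u) (k * n)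

section CutLevel

variable {n k u : ℕ}

theorem cutLevel_even (i : ℕ) : cutLevel n k u (2 * i) = min (i * n) (k * n) := by
  simp [cutLevel]

theorem cutLevel_odd (i : ℕ) : cutLevel n k u (2 * i + 1) = min (i * n + u) (k * n) := by
  simp [cutLevel, show (2 * i + 1) / 2 = i by omega]

theorem cutLevel_zero : cutLevel n k u 0 = 0 := by
  simp [cutLevel]

theorem cutLevel_of_two_mul_le {j : ℕ} (hj : 2 * k ≤ j) : cutLevel n k u j = k * n := by
  have : k * n ≤ j / 2 * n := Nat.mul_le_mul_right n (by omega)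
  exact min_eq_right (by omega)

theorem cutLevel_monotone (hu : u ≤ n) : Monotone (cutLevel n k u) := by
  refine monotone_nat_of_le_succ fun j => ?_
  obtain ⟨i, rfl | rfl⟩ := j.even_or_odd'
  · rw [cutLevel_even, cutLevel_odd]
    omega
  · rw [show 2 * i + 1 + 1 = 2 * (i + 1) by ring, cutLevel_even, cutLevel_odd, Nat.add_mul]
    omega

theorem mod_lt_iff_even_of_mem_block {m j : ℕ} (hu : u ≤ n)
    (hm : m ∈ Set.Ico (cutLevel n k u j) (cutLevel n k u (j + 1))) : m % n < u ↔ Even j := by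
  obtain ⟨hlo, hhi⟩ := hm
  obtain ⟨i, rfl | rfl⟩ := j.even_or_odd'
  · rw [cutLevel_even] at hlo
    rw [cutLevel_odd] at hhi
    obtain ⟨r, rfl⟩ := Nat.exists_eq_add_of_le (show i * n ≤ m by omega)
    rw [Nat.mul_add_mod_self_right, Nat.mod_eq_of_lt (by omega)]
    simpa only [even_two_mul, iff_true] using (by omega : r < u)
  · rw [cutLevel_odd] at hlo
    rw [show 2 * i + 1 + 1 = 2 * (i + 1) by ring, cutLevel_even, Nat.add_mul] at hhi
    obtain ⟨r, rfl⟩ := Nat.exists_eq_add_of_le (show i * n ≤ m by omega)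
    rw [Nat.mul_add_mod_self_right, Nat.mod_eq_of_lt (by omega)]
    simpa only [Nat.not_even_two_mul_add_one, iff_false, not_lt] using (by omega : u ≤ r)

end CutLevel

theorem exists_surjective_bitstrings {α : Type*} [Fintype α] [Nonempty α] {l : ℕ}
    (h : Fintype.card α ≤ 2 ^ l) : ∃ d : (Fin l → Bool) → α, Function.Surjective d := by
  obtain ⟨e⟩ : Nonempty (α ↪ (Fin l → Bool)) :=
    Function.Embedding.nonempty_of_card_le (by simpa using h)
  exact ⟨Function.invFun e, Function.invFun_surjective e.injective⟩

/-- **Protocol simulation of `k`-NOBDDs.** If `f` is computed by a `k`-NOBDD of width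
`w ≥ 2` with order `θ`, and `l = ⌈log₂ w⌉`, then for every `1 ≤ u < n`, taking the
partition with `X_A = {x_{θ(1)}, …, x_{θ(u)}}`, the function `f` is computed by some
`(π, 2k-1, l)` automata communication nondeterministic protocol. -/
theorem knobdd_to_protocol (n k w : ℕ) (hw : 2 ≤ w) (f : (Fin n → Bool) → Bool)
    (P : KNOBDD n k w) (hP : P.Computes f) (u : ℕ) (hu1 : 1 ≤ u) (hun : u < n) :
    ∃ Q : NProtocol n (Finset.univ.filter fun i : Fin n => ((P.order.symm i : Fin n) : ℕ) < u)
        (2 * k - 1) (Nat.clog 2 w),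
      Q.Computes f := by
  have : Nonempty (Fin w) := ⟨P.start⟩
  obtain ⟨d, hd⟩ : ∃ d : (Fin (Nat.clog 2 w) → Bool) → Fin w, Function.Surjective d :=
    exists_surjective_bitstrings (by simpa using Nat.le_pow_clog one_lt_two w)
  let c := cutLevel n k u
  have hc : Monotone c := cutLevel_monotone hun.le
  refine ⟨.ofBlocks _ _ d (fun j ν => LevelPath (P.Step · ν) (c j) (c (j + 1))) P.start P.accept,
    NProtocol.computes_ofBlocks (by grind) hd (fun j hj => ?alice) (fun j hj => ?bob)
      fun ν => ?blocks⟩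
  case alice =>
    refine LevelPath.dependsOn fun m hm => KNOBDD.dependsOn_step fun h => ?_
    simpa [symm_varIdx] using (mod_lt_iff_even_of_mem_block hun.le hm).mpr hj
  case bob =>
    refine LevelPath.dependsOn fun m hm => KNOBDD.dependsOn_step fun h => ?_
    simpa [symm_varIdx] using mt (mod_lt_iff_even_of_mem_block hun.le hm).mp hj
  case blocks =>
    have first_cut : c 0 = 0 := cutLevel_zero
    have last_cut : c (2 * k - 1 - 1 + 2) = k * n := cutLevel_of_two_mul_le (by omega)
    simp only [KNOBDD.computes_iff_levelPath.mp hP ν, LevelPath.coarsen_iff hc, first_cut, last_cut]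
end

section
/- Subfunction bound from nondeterministic automata protocols (Lemma l2): Let t ≥ 1 be odd, l ≥ 1, and let π = (X_A, X_B) be a partition of the n Boolean variables. If f : {0,1}^n → {0,1} is computed by some (π, t, l) automata communication nondeterministic protocol, then N^π(f) ≤ 2^{2^l·((t+1)·2^{l−1} + l)}. -/
/-! For a fixed input, Alice's side of the protocol is a set of first messages and, for each of her
later rounds, a map from messages to sets of messages. Together with Bob's input these data
determine whether an accepting run exists, so inputs with the same data give the same subfunction,
and the number of subfunctions is at most the number of possible data. -/

lemma card_image_le_card_image_of_factorsThrough {α β γ : Type*} [DecidableEq β] [DecidableEq γ]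
    {f : α → γ} {g : α → β} (hfg : f.FactorsThrough g) (s : Finset α) :
    (s.image f).card ≤ (s.image g).card := by
  obtain ⟨u, hus, hinj, himage⟩ :=
    Finset.exists_subset_injOn_image_eq_of_surjOn (f := f) s (s.image f)
      (by simp [Set.surjOn_image])
  rw [← himage, Finset.card_image_of_injOn hinj]
  exact Finset.card_le_card_of_injOn g (fun _ ha => Finset.mem_image_of_mem g (hus ha))
    fun _ ha _ hb hab => hinj ha hb (hfg hab)

lemma forall_lt_ite_even_iff {t : ℕ} {p q : ℕ → Prop} :
    (∀ j < t, if j % 2 = 0 then p j else q j) ↔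
      (∀ i, 2 * i < t → p (2 * i)) ∧ ∀ i : Fin (t / 2), q (2 * i + 1) := by
  constructor
  · intro h
    refine ⟨fun i hi => ?_, fun i => ?_⟩
    · simpa using h (2 * i) hi
    · simpa [Nat.add_mod] using h (2 * i + 1) (by omega)
  · rintro ⟨heven, hodd⟩ j hj
    obtain ⟨i, rfl | rfl⟩ := j.even_or_odd'
    · simpa using heven i hj
    · simpa [Nat.add_mod] using hodd ⟨i, by omega⟩

/-- What Alice contributes to a run on one fixed input: her possible first messages and, for each
of `k` later rounds, her possible answers to each message in `M`. -/
abbrev AliceStrategy (M : Type*) (k : ℕ) : Type _ :=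
  Set M × (Fin k → M → Set M)

lemma card_aliceStrategy (M : Type*) [Fintype M] [DecidableEq M] (k : ℕ) :
    Fintype.card (AliceStrategy M k) = 2 ^ (Fintype.card M + k * Fintype.card M ^ 2) := by
  simp only [Fintype.card_prod, Fintype.card_fun, Fintype.card_set, Fintype.card_fin]
  ring

namespace NProtocol

variable {n t l : ℕ} {A : Finset (Fin n)}

/-- The strategy that Alice's input `σ` selects in a protocol with `t + 1` rounds. Her later rounds
are numbered `3, 5, …`, and `t / 2` of them take place. -/
def aliceStrategy (P : NProtocol n A (t + 1) l) (σ : {i : Fin n // i ∈ A} → Bool) :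
    AliceStrategy (Fin l → Bool) (t / 2) :=
  (P.first σ, fun i m => P.nextA (2 * i + 3) m σ)

/-- Some run in which Alice follows `S` and Bob has input `γ` ends with output `1`. Message `ms j`
belongs to round `j + 1`, so Bob's messages are those of odd index. -/
def Accepts (P : NProtocol n A (t + 1) l) (S : AliceStrategy (Fin l → Bool) (t / 2))
    (γ : {i : Fin n // i ∉ A} → Bool) : Prop :=
  ∃ ms : ℕ → (Fin l → Bool),
    ms 0 ∈ S.1 ∧
    (∀ i, 2 * i < t → ms (2 * i + 1) ∈ P.nextB (2 * i + 2) (ms (2 * i)) γ) ∧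
    (∀ i : Fin (t / 2), ms (2 * i + 2) ∈ S.2 i (ms (2 * i + 1))) ∧
    P.out (ms t) γ = true

lemma Computes.eq_true_iff_accepts {P : NProtocol n A (t + 1) l} {f : (Fin n → Bool) → Bool}
    (hP : P.Computes f) (σ : {i : Fin n // i ∈ A} → Bool) (γ : {i : Fin n // i ∉ A} → Bool) :
    f (mergeAssign A σ γ) = true ↔ P.Accepts (P.aliceStrategy σ) γ := by
  simp only [hP σ γ, Accepts, aliceStrategy, Nat.add_lt_add_iff_right, forall_lt_ite_even_iff,
    Nat.add_sub_cancel, and_assoc]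

lemma Computes.subfunction_factorsThrough_aliceStrategy {P : NProtocol n A (t + 1) l}
    {f : (Fin n → Bool) → Bool} (hP : P.Computes f) :
    (fun σ γ => f (mergeAssign A σ γ)).FactorsThrough P.aliceStrategy := by
  intro σ σ' hσ
  funext γ
  rw [Bool.eq_iff_iff, hP.eq_true_iff_accepts, hP.eq_true_iff_accepts, hσ]

end NProtocol

theorem protocol_subfunction_bound_general {n t l : ℕ} {A : Finset (Fin n)}
    {f : (Fin n → Bool) → Bool} {P : NProtocol n A (t + 1) l} (hP : P.Computes f) :
    NsubA f A ≤ 2 ^ (2 ^ l + t / 2 * (2 ^ l) ^ 2) := by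
  classical
  calc NsubA f A
      ≤ (Finset.univ.image P.aliceStrategy).card :=
        card_image_le_card_image_of_factorsThrough hP.subfunction_factorsThrough_aliceStrategy _
    _ ≤ Fintype.card (AliceStrategy (Fin l → Bool) (t / 2)) := Finset.card_le_univ _
    _ = 2 ^ (2 ^ l + t / 2 * (2 ^ l) ^ 2) := by
        rw [card_aliceStrategy, Fintype.card_fun, Fintype.card_bool, Fintype.card_fin]

lemma two_pow_add_half_mul_le (t l : ℕ) :
    2 ^ l + t / 2 * (2 ^ l) ^ 2 ≤ 2 ^ l * ((t + 2) * 2 ^ (l - 1) + l) := by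
  have hpow : 2 ^ l ≤ 2 * 2 ^ (l - 1) := by
    rw [← pow_succ']
    exact Nat.pow_le_pow_right two_pos (by omega)
  calc 2 ^ l + t / 2 * (2 ^ l) ^ 2
      = 2 ^ l * (1 + t / 2 * 2 ^ l) := by ring
    _ ≤ 2 ^ l * (2 * 2 ^ (l - 1) + t / 2 * (2 * 2 ^ (l - 1))) := by
        gcongr
        exact Nat.one_le_two_pow.trans hpow
    _ = 2 ^ l * ((t / 2 * 2 + 2) * 2 ^ (l - 1)) := by ring
    _ ≤ 2 ^ l * ((t + 2) * 2 ^ (l - 1)) := by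
        gcongr
        exact Nat.div_mul_le_self t 2
    _ ≤ 2 ^ l * ((t + 2) * 2 ^ (l - 1) + l) := by
        gcongr
        exact Nat.le_add_right _ _

/-- **Subfunction bound from nondeterministic automata protocols.** If `t ≥ 1` is odd,
`l ≥ 1`, and `f : {0,1}^n → {0,1}` is computed by some `(π, t, l)` automata communication
nondeterministic protocol with partition `π = (A, Aᶜ)`, then
`N^π(f) ≤ 2^(2^l · ((t+1)·2^(l-1) + l))`. -/
theorem protocol_subfunction_bound (n t l : ℕ) (ht : Odd t) (ht1 : 1 ≤ t) (hl : 1 ≤ l)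
    (A : Finset (Fin n)) (f : (Fin n → Bool) → Bool)
    (P : NProtocol n A t l) (hP : P.Computes f) :
    NsubA f A ≤ 2 ^ (2 ^ l * ((t + 1) * 2 ^ (l - 1) + l)) := by
  obtain ⟨k, rfl⟩ := ht
  exact (protocol_subfunction_bound_general hP).trans
    (Nat.pow_le_pow_right two_pos (two_pow_add_half_mul_le (2 * k) l))
end

section
/- β-closeness of bilinear forms of matrix powers (Lemma bClosenessOfAcceptPr, general form): Let β ≥ 1 be real, r ≥ 1 and z ≥ 0 be integers, let p and p' be vectors in ℝ^r with nonnegative entries that are β-close (entrywise), let M and M' be r×r matrices with nonnegative entries that are β-close (entrywise), and let q ∈ ℝ^r have nonnegative entries. Then the two nonnegative reals pᵀ·M^z·q and p'ᵀ·(M')^z·q are β^{z+1}-close. -/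
open Matrix

/-- Two nonnegative reals `p` and `p'` are `β`-close (for `β ≥ 1`) if either `p = p' = 0`,
or `p > 0`, `p' > 0` and `β⁻¹ ≤ p / p' ≤ β`. -/
def BClose (β p p' : ℝ) : Prop :=
  (p = 0 ∧ p' = 0) ∨ (0 < p ∧ 0 < p' ∧ β⁻¹ ≤ p / p' ∧ p / p' ≤ β)

/-! Common upper and lower bounds on ratios survive addition and multiply under multiplication.
Each entry of `M ^ z *ᵥ q` is obtained from `q` by `z` rounds of taking sums of products with
entries of `M`, so it costs `z` factors `β`; the pairing with `p` costs one more. -/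

namespace BClose

variable {β γ a b c d : ℝ}

protected theorem refl (hβ : 1 ≤ β) (ha : 0 ≤ a) : BClose β a a := by
  rcases ha.eq_or_lt with rfl | ha
  · exact .inl ⟨rfl, rfl⟩
  · rw [BClose, div_self ha.ne']
    exact .inr ⟨ha, ha, inv_le_one_of_one_le₀ hβ, hβ⟩

protected theorem add (hab : BClose β a b) (hcd : BClose β c d) : BClose β (a + c) (b + d) := by
  rcases hab with ⟨rfl, rfl⟩ | ⟨ha, hb, lower_ab, upper_ab⟩
  · simpa only [zero_add] using hcd
  rcases hcd with ⟨rfl, rfl⟩ | ⟨hc, hd, lower_cd, upper_cd⟩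
  · simpa only [add_zero] using .inr ⟨ha, hb, lower_ab, upper_ab⟩
  refine .inr ⟨add_pos ha hc, add_pos hb hd, ?_, ?_⟩
  · rw [le_div_iff₀ (add_pos hb hd), mul_add]
    exact add_le_add ((le_div_iff₀ hb).1 lower_ab) ((le_div_iff₀ hd).1 lower_cd)
  · rw [div_le_iff₀ (add_pos hb hd), mul_add]
    exact add_le_add ((div_le_iff₀ hb).1 upper_ab) ((div_le_iff₀ hd).1 upper_cd)

protected theorem mul (hab : BClose β a b) (hcd : BClose γ c d) :
    BClose (β * γ) (a * c) (b * d) := by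
  rcases hab with ⟨rfl, rfl⟩ | ⟨ha, hb, lower_ab, upper_ab⟩
  · exact .inl ⟨zero_mul c, zero_mul d⟩
  rcases hcd with ⟨rfl, rfl⟩ | ⟨hc, hd, lower_cd, upper_cd⟩
  · exact .inl ⟨mul_zero a, mul_zero b⟩
  have ratio_ab_pos : 0 < a / b := div_pos ha hb
  have ratio_cd_pos : 0 < c / d := div_pos hc hd
  have hβ : 0 < β := ratio_ab_pos.trans_le upper_ab
  have hγ : 0 < γ := ratio_cd_pos.trans_le upper_cd
  refine .inr ⟨mul_pos ha hc, mul_pos hb hd, ?_, ?_⟩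
  · rw [mul_inv, mul_div_mul_comm]
    gcongr
  · rw [mul_div_mul_comm]
    gcongr

protected theorem sum {ι : Type*} {s : Finset ι} {f g : ι → ℝ} (h : ∀ i ∈ s, BClose β (f i) (g i)) :
    BClose β (∑ i ∈ s, f i) (∑ i ∈ s, g i) := by
  induction s using Finset.cons_induction with
  | empty => exact .inl ⟨rfl, rfl⟩
  | cons i s hi ih =>
    rw [Finset.forall_mem_cons] at h
    rw [Finset.sum_cons, Finset.sum_cons]
    exact h.1.add (ih h.2)

protected theorem dotProduct {ι : Type*} [Fintype ι] {p p' q q' : ι → ℝ}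
    (hp : ∀ i, BClose β (p i) (p' i)) (hq : ∀ i, BClose γ (q i) (q' i)) :
    BClose (β * γ) (p ⬝ᵥ q) (p' ⬝ᵥ q') :=
  .sum fun i _ => (hp i).mul (hq i)

protected theorem mulVec {m n : Type*} [Fintype n] {M M' : Matrix m n ℝ} {q q' : n → ℝ}
    (hM : ∀ i j, BClose β (M i j) (M' i j)) (hq : ∀ j, BClose γ (q j) (q' j)) (i : m) :
    BClose (β * γ) ((M *ᵥ q) i) ((M' *ᵥ q') i) :=
  .dotProduct (hM i) hq

theorem pow_mulVec {ι : Type*} [Fintype ι] [DecidableEq ι] {M M' : Matrix ι ι ℝ} {q q' : ι → ℝ}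
    (hM : ∀ i j, BClose β (M i j) (M' i j)) (hq : ∀ i, BClose γ (q i) (q' i)) (z : ℕ) (i : ι) :
    BClose (β ^ z * γ) ((M ^ z *ᵥ q) i) ((M' ^ z *ᵥ q') i) := by
  induction z generalizing i with
  | zero => simpa only [pow_zero, one_mul, one_mulVec] using hq i
  | succ z ih => simpa only [pow_succ', mul_assoc, mulVec_mulVec] using BClose.mulVec hM ih i

end BClose

theorem bclose_bilinear_pow_general {ι : Type*} [Fintype ι] [DecidableEq ι] {α β γ : ℝ}
    {p p' q q' : ι → ℝ} {M M' : Matrix ι ι ℝ} (hp : ∀ i, BClose α (p i) (p' i))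
    (hM : ∀ i j, BClose β (M i j) (M' i j)) (hq : ∀ i, BClose γ (q i) (q' i)) (z : ℕ) :
    BClose (α * (β ^ z * γ)) (p ⬝ᵥ M ^ z *ᵥ q) (p' ⬝ᵥ M' ^ z *ᵥ q') :=
  .dotProduct hp (.pow_mulVec hM hq z)

/-- **β-closeness of bilinear forms of matrix powers.** If the nonnegative vectors `p, p'`
are entrywise `β`-close, the nonnegative matrices `M, M'` are entrywise `β`-close
(`β ≥ 1`, `r ≥ 1`, `z ≥ 0`), and `q` is a nonnegative vector, then the nonnegative reals
`pᵀ·M^z·q` and `p'ᵀ·(M')^z·q` are `β^(z+1)`-close. -/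
theorem bclose_bilinear_pow (β : ℝ) (hβ : 1 ≤ β) (r : ℕ) (hr : 1 ≤ r) (z : ℕ)
    (p p' : Fin r → ℝ) (hp : ∀ i, 0 ≤ p i) (hp' : ∀ i, 0 ≤ p' i)
    (hpc : ∀ i, BClose β (p i) (p' i))
    (M M' : Matrix (Fin r) (Fin r) ℝ)
    (hM : ∀ i j, 0 ≤ M i j) (hM' : ∀ i j, 0 ≤ M' i j)
    (hMc : ∀ i j, BClose β (M i j) (M' i j))
    (q : Fin r → ℝ) (hq : ∀ i, 0 ≤ q i) :
    BClose (β ^ (z + 1)) (p ⬝ᵥ (M ^ z).mulVec q) (p' ⬝ᵥ (M' ^ z).mulVec q) := by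
  simpa only [pow_succ', mul_one] using
    bclose_bilinear_pow_general hpc hMc (fun i => .refl le_rfl (hq i)) z
end

section
/- Effect of zeroing small entries of a substochastic matrix (abstract core of Lemma cpp_small_elems): Let N ≥ 1 and m ≥ 0 be integers, let ε ≥ 0 be real, and let M be an N×N real matrix with nonnegative entries whose every row sum is at most 1. Let M' be the matrix obtained from M by replacing every entry that is strictly less than ε by 0. Let p ∈ ℝ^N have nonnegative entries with Σ_a p_a ≤ 1 and let q ∈ ℝ^N have entries in [0,1]. Then 0 ≤ pᵀ·M^m·q − pᵀ·(M')^m·q ≤ m·N²·ε. -/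
open Matrix

/-!
Let `u k = M ^ k *ᵥ q` and `v k = M' ^ k *ᵥ q`. Entrywise `0 ≤ M' ≤ M`, hence `0 ≤ v k ≤ u k`,
which is the lower bound. For the upper bound,
`u (k + 1) - v (k + 1) = M *ᵥ (u k - v k) + (M - M') *ᵥ v k`.
The rows of `M` have sum at most `1`, so the first term is no larger than the error already present;
`v k ≤ 1`, so the second is at most the row sums of `M - M'`, which are at most `N * ε`.
The error therefore grows by at most `N * ε` per step, and `m * N * ε ≤ m * N ^ 2 * ε`.
-/

section PowMulVec

variable {n R : Type*} [Fintype n]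

section Semiring

variable [Semiring R] [PartialOrder R] [IsOrderedRing R]

theorem dotProduct_le_mul_of_sum_le {w x : n → R} {s c : R} (hw : 0 ≤ w) (hs : ∑ i, w i ≤ s)
    (hc : 0 ≤ c) (hx : ∀ i, x i ≤ c) : w ⬝ᵥ x ≤ s * c :=
  calc w ⬝ᵥ x ≤ ∑ i, w i * c :=
        Finset.sum_le_sum fun i _ => mul_le_mul_of_nonneg_left (hx i) (hw i)
    _ = (∑ i, w i) * c := (Finset.sum_mul ..).symm
    _ ≤ s * c := mul_le_mul_of_nonneg_right hs hc

/-- Row-substochastic matrices: nonnegative entries and all row sums at most `1`. Such a matrix does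
not increase an upper bound `c ≥ 0` on the entries of a vector. -/
structure IsRowSubstochastic (A : Matrix n n R) : Prop where
  nonneg : ∀ i j, 0 ≤ A i j
  sum_row_le_one : ∀ i, ∑ j, A i j ≤ 1

theorem IsRowSubstochastic.of_le {A B : Matrix n n R} (hA : IsRowSubstochastic A)
    (hB : ∀ i j, 0 ≤ B i j) (hBA : ∀ i j, B i j ≤ A i j) : IsRowSubstochastic B where
  nonneg := hB
  sum_row_le_one i := (Finset.sum_le_sum fun j _ => hBA i j).trans (hA.sum_row_le_one i)

variable [DecidableEq n]

theorem IsRowSubstochastic.pow_mulVec_le_one {A : Matrix n n R} (hA : IsRowSubstochastic A)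
    {q : n → R} (hq : q ≤ 1) (k : ℕ) : A ^ k *ᵥ q ≤ 1 := by
  induction k with
  | zero => simpa using hq
  | succ k ih =>
    intro i
    rw [pow_succ', ← mulVec_mulVec]
    exact (dotProduct_le_mul_of_sum_le (hA.nonneg i) (hA.sum_row_le_one i) zero_le_one ih).trans_eq
      (one_mul 1)

theorem pow_mulVec_nonneg {A : Matrix n n R} (hA : ∀ i j, 0 ≤ A i j) {q : n → R} (hq : 0 ≤ q)
    (k : ℕ) : 0 ≤ A ^ k *ᵥ q := by
  induction k with
  | zero => simpa using hq
  | succ k ih =>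
    intro i
    rw [pow_succ', ← mulVec_mulVec]
    exact dotProduct_nonneg_of_nonneg (hA i) ih

theorem pow_mulVec_le_pow_mulVec {A B : Matrix n n R} (hB : ∀ i j, 0 ≤ B i j)
    (hBA : ∀ i j, B i j ≤ A i j) {q : n → R} (hq : 0 ≤ q) (k : ℕ) :
    B ^ k *ᵥ q ≤ A ^ k *ᵥ q := by
  induction k with
  | zero => simp
  | succ k ih =>
    intro i
    rw [pow_succ' B, pow_succ' A, ← mulVec_mulVec, ← mulVec_mulVec]
    have hA : 0 ≤ A i := fun j => (hB i j).trans (hBA i j)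
    calc B i ⬝ᵥ (B ^ k *ᵥ q) ≤ A i ⬝ᵥ (B ^ k *ᵥ q) :=
          dotProduct_le_dotProduct_of_nonneg_right (hBA i) (pow_mulVec_nonneg hB hq k)
      _ ≤ A i ⬝ᵥ (A ^ k *ᵥ q) := dotProduct_le_dotProduct_of_nonneg_left ih hA

end Semiring

section Ring

variable [Ring R] [DecidableEq n]

theorem pow_succ_mulVec_sub_pow_succ_mulVec (A B : Matrix n n R) (q : n → R) (k : ℕ) :
    A ^ (k + 1) *ᵥ q - B ^ (k + 1) *ᵥ q =
      A *ᵥ (A ^ k *ᵥ q - B ^ k *ᵥ q) + (A - B) *ᵥ (B ^ k *ᵥ q) := by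
  rw [pow_succ' A, pow_succ' B, mulVec_sub, sub_mulVec]
  simp only [mulVec_mulVec, sub_add_sub_cancel]

variable [PartialOrder R] [IsOrderedRing R]

theorem IsRowSubstochastic.pow_mulVec_sub_pow_mulVec_le {A B : Matrix n n R}
    (hA : IsRowSubstochastic A) (hB : ∀ i j, 0 ≤ B i j) (hBA : ∀ i j, B i j ≤ A i j) {δ : R}
    (hδ : ∀ i, ∑ j, (A i j - B i j) ≤ δ) {q : n → R} (hq : q ≤ 1) (k : ℕ) (i : n) :
    (A ^ k *ᵥ q - B ^ k *ᵥ q) i ≤ k * δ := by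
  induction k generalizing i with
  | zero => simp
  | succ k ih =>
    have hAB : 0 ≤ (A - B) i := fun j => sub_nonneg.2 (hBA i j)
    have hδ0 : 0 ≤ δ := (Finset.sum_nonneg fun j _ => hAB j).trans (hδ i)
    have propagated : (A *ᵥ (A ^ k *ᵥ q - B ^ k *ᵥ q)) i ≤ 1 * (k * δ) :=
      dotProduct_le_mul_of_sum_le (hA.nonneg i) (hA.sum_row_le_one i)
        (mul_nonneg k.cast_nonneg hδ0) ih
    have introduced : ((A - B) *ᵥ (B ^ k *ᵥ q)) i ≤ δ * 1 :=
      dotProduct_le_mul_of_sum_le hAB (hδ i) zero_le_one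
        ((hA.of_le hB hBA).pow_mulVec_le_one hq k)
    calc (A ^ (k + 1) *ᵥ q - B ^ (k + 1) *ᵥ q) i
        = (A *ᵥ (A ^ k *ᵥ q - B ^ k *ᵥ q)) i + ((A - B) *ᵥ (B ^ k *ᵥ q)) i := by
          rw [pow_succ_mulVec_sub_pow_succ_mulVec, Pi.add_apply]
      _ ≤ 1 * (k * δ) + δ * 1 := add_le_add propagated introduced
      _ = (k + 1 : ℕ) * δ := by rw [one_mul, mul_one, Nat.cast_succ, add_one_mul]

end Ring

end PowMulVec

section ZeroBelow

variable {m n R : Type*}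

/-- The matrix obtained from `A` by replacing every entry strictly smaller than `ε` by `0`: the
matrix `M'` of the theorem when `A = M`. -/
def zeroBelow [Zero R] [LT R] [DecidableLT R] (ε : R) (A : Matrix m n R) : Matrix m n R :=
  of fun i j => if A i j < ε then 0 else A i j

theorem zeroBelow_nonneg [Zero R] [Preorder R] [DecidableLT R] (ε : R) {A : Matrix m n R}
    (hA : ∀ i j, 0 ≤ A i j) (i : m) (j : n) : 0 ≤ zeroBelow ε A i j := by
  rw [zeroBelow, of_apply]
  split_ifs
  exacts [le_rfl, hA i j]

theorem zeroBelow_le [Zero R] [Preorder R] [DecidableLT R] (ε : R) {A : Matrix m n R}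
    (hA : ∀ i j, 0 ≤ A i j) (i : m) (j : n) : zeroBelow ε A i j ≤ A i j := by
  rw [zeroBelow, of_apply]
  split_ifs
  exacts [hA i j, le_rfl]

theorem sub_zeroBelow_le [AddGroup R] [Preorder R] [DecidableLT R] {ε : R} (hε : 0 ≤ ε)
    (A : Matrix m n R) (i : m) (j : n) : A i j - zeroBelow ε A i j ≤ ε := by
  rw [zeroBelow, of_apply]
  split_ifs with h
  exacts [(sub_zero _).trans_le h.le, (sub_self _).trans_le hε]

theorem sum_sub_zeroBelow_le [Fintype n] [Ring R] [PartialOrder R] [IsOrderedRing R]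
    [DecidableLT R] {ε : R} (hε : 0 ≤ ε) (A : Matrix m n R) (i : m) :
    ∑ j, (A i j - zeroBelow ε A i j) ≤ Fintype.card n * ε := by
  simpa [nsmul_eq_mul] using Finset.sum_le_card_nsmul Finset.univ _ ε
    fun j _ => sub_zeroBelow_le hε A i j

end ZeroBelow

theorem zeroing_small_entries_general {n R : Type*} [Fintype n] [DecidableEq n] [Ring R]
    [PartialOrder R] [IsOrderedRing R] [DecidableLT R] {M : Matrix n n R}
    (hM : IsRowSubstochastic M) {ε : R} (hε : 0 ≤ ε) {p q : n → R} (hp0 : 0 ≤ p)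
    (hp1 : ∑ i, p i ≤ 1) (hq0 : 0 ≤ q) (hq1 : q ≤ 1) (m : ℕ) :
    0 ≤ p ⬝ᵥ (M ^ m *ᵥ q) - p ⬝ᵥ (zeroBelow ε M ^ m *ᵥ q) ∧
      p ⬝ᵥ (M ^ m *ᵥ q) - p ⬝ᵥ (zeroBelow ε M ^ m *ᵥ q) ≤ m * (Fintype.card n * ε) := by
  have nonneg := zeroBelow_nonneg ε hM.nonneg
  have le := zeroBelow_le ε hM.nonneg
  have bound_nonneg : 0 ≤ m * (Fintype.card n * ε) :=
    mul_nonneg m.cast_nonneg (mul_nonneg (Nat.cast_nonneg _) hε)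
  rw [← dotProduct_sub]
  constructor
  · exact dotProduct_nonneg_of_nonneg hp0 (sub_nonneg.2 (pow_mulVec_le_pow_mulVec nonneg le hq0 m))
  · simpa using dotProduct_le_mul_of_sum_le hp0 hp1 bound_nonneg
      (hM.pow_mulVec_sub_pow_mulVec_le nonneg le (sum_sub_zeroBelow_le hε M) hq1 m)

/-- **Effect of zeroing small entries of a substochastic matrix.** Let `M` be an `N×N`
matrix with nonnegative entries and row sums at most `1`, and let `M'` be obtained from
`M` by replacing every entry strictly smaller than `ε ≥ 0` by `0`. Then for every
nonnegative vector `p` with `Σ p ≤ 1` and every vector `q` with entries in `[0,1]`,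
`0 ≤ pᵀ·M^m·q − pᵀ·(M')^m·q ≤ m·N²·ε`. -/
theorem zeroing_small_entries (N m : ℕ) (hN : 1 ≤ N) (ε : ℝ) (hε : 0 ≤ ε)
    (M M' : Matrix (Fin N) (Fin N) ℝ)
    (hM0 : ∀ i j, 0 ≤ M i j) (hrow : ∀ i, ∑ j, M i j ≤ 1)
    (hM' : ∀ i j, M' i j = if M i j < ε then 0 else M i j)
    (p : Fin N → ℝ) (hp0 : ∀ i, 0 ≤ p i) (hp1 : ∑ i, p i ≤ 1)
    (q : Fin N → ℝ) (hq0 : ∀ i, 0 ≤ q i) (hq1 : ∀ i, q i ≤ 1) :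
    0 ≤ p ⬝ᵥ (M ^ m).mulVec q - p ⬝ᵥ (M' ^ m).mulVec q ∧
    p ⬝ᵥ (M ^ m).mulVec q - p ⬝ᵥ (M' ^ m).mulVec q ≤ (m : ℝ) * (N : ℝ) ^ 2 * ε := by
  obtain rfl : M' = zeroBelow ε M := Matrix.ext hM'
  have h := zeroing_small_entries_general ⟨hM0, hrow⟩ hε hp0 hp1 hq0 hq1 m
  refine ⟨h.1, h.2.trans ?_⟩
  have card_le : (N : ℝ) ≤ (N : ℝ) ^ 2 := mod_cast Nat.le_self_pow two_ne_zero N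
  rw [Fintype.card_fin, ← mul_assoc]
  gcongr
end

section
/- Rate inequality for the deterministic hierarchy (from the proof of Lemma peq2_kobdd-small): Let k > 0 and δ > 0 be reals and let v ≥ 2 and w ≥ 2 be integers. If δ·w·log₂ w > 48·v·log₂ v, then w^{k·w/48} > v^{(k/δ − 1)·v + 1}, where both sides are real powers (rpow) with positive real bases and real exponents. -/
section RealPowers

variable {b c k x y δ : ℝ}

theorem rpow_lt_rpow_iff_mul_logb_lt {s t : ℝ} (hb : 1 < b) (hx : 0 < x) (hy : 0 < y) :
    x ^ s < y ^ t ↔ s * Real.logb b x < t * Real.logb b y := by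
  rw [← Real.logb_lt_logb_iff hb (Real.rpow_pos_of_pos hx s) (Real.rpow_pos_of_pos hy t),
    Real.logb_rpow_eq_mul_logb_of_pos hx, Real.logb_rpow_eq_mul_logb_of_pos hy]

theorem rpow_one_sub_self_le_one (hx : 0 ≤ x) : x ^ (1 - x) ≤ 1 := by
  rcases le_total x 1 with hx_le | hx_ge
  · exact Real.rpow_le_one hx hx_le (sub_nonneg.mpr hx_le)
  · exact Real.rpow_le_one_of_one_le_of_nonpos hx_ge (sub_nonpos.mpr hx_ge)

theorem rpow_sub_one_mul_self_add_one_le (a : ℝ) (hx : 0 < x) :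
    x ^ ((a - 1) * x + 1) ≤ x ^ (a * x) :=
  calc
    x ^ ((a - 1) * x + 1) = x ^ (a * x + (1 - x)) := by ring_nf
    _ = x ^ (a * x) * x ^ (1 - x) := Real.rpow_add hx _ _
    _ ≤ x ^ (a * x) :=
      mul_le_of_le_one_right (Real.rpow_nonneg hx.le _) (rpow_one_sub_self_le_one hx.le)

theorem rpow_div_mul_self_lt_of_mul_logb_lt (hb : 1 < b) (hc : 0 < c) (hk : 0 < k) (hδ : 0 < δ)
    (hx : 0 < x) (hy : 0 < y) (h : c * x * Real.logb b x < δ * y * Real.logb b y) :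
    x ^ (k / δ * x) < y ^ (k * y / c) := by
  rw [rpow_lt_rpow_iff_mul_logb_lt hb hx hy]
  calc
    k / δ * x * Real.logb b x = k / (δ * c) * (c * x * Real.logb b x) := by field_simp
    _ < k / (δ * c) * (δ * y * Real.logb b y) := by gcongr
    _ = k * y / c * Real.logb b y := by field_simp

theorem det_rate_inequality_general (hb : 1 < b) (hc : 0 < c) (hk : 0 < k) (hδ : 0 < δ)
    (hx : 0 < x) (hy : 0 < y) (h : c * x * Real.logb b x < δ * y * Real.logb b y) :
    x ^ ((k / δ - 1) * x + 1) < y ^ (k * y / c) :=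
  (rpow_sub_one_mul_self_add_one_le (k / δ) hx).trans_lt
    (rpow_div_mul_self_lt_of_mul_logb_lt hb hc hk hδ hx hy h)

end RealPowers

/-- **Rate inequality for the deterministic hierarchy.** For reals `k, δ > 0` and integers
`v, w ≥ 2`, if `δ·w·log₂ w > 48·v·log₂ v` then `w^(k·w/48) > v^((k/δ − 1)·v + 1)`, where
both sides are real powers (rpow) with positive real bases and real exponents. -/
theorem det_rate_inequality (k δ : ℝ) (v w : ℕ) (hk : 0 < k) (hδ : 0 < δ)
    (hv : 2 ≤ v) (hw : 2 ≤ w)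
    (h : δ * (w : ℝ) * Real.logb 2 w > 48 * (v : ℝ) * Real.logb 2 v) :
    (w : ℝ) ^ ((k * (w : ℝ)) / 48) > (v : ℝ) ^ ((k / δ - 1) * (v : ℝ) + 1) :=
  det_rate_inequality_general one_lt_two (by norm_num) hk hδ (by positivity) (by positivity) h
end
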